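/- arXiv:1005.0181 — 2 statements merged into one kernel-verified Lean document; each statement's English description precedes it below -/
import Mathlib

section
/- For every limit-periodic potential W : ℤ → ℝ and every ε > 0 there exist a limit-periodic potential V : ℤ → ℝ with sup_n |V(n) − W(n)| ≤ ε, a real number E*, a real γ > 0, and p_k-periodic potentials V^k (k ≥ 1) with (p_k) strictly increasing, such that: (a) V(n) = V^k(n) for all 0 ≤ n ≤ p_k and sup_n |V(n) − V^k(n)| → 0; (b) for every k, limsup_{N→∞} (1/N)·log‖A_N(E*, V^k)‖ ≥ γ; and (c) liminf_{E → E*} [ liminf_{N→∞} (1/N)·log‖A_N(E, V)‖ ] = 0, where the outer liminf is over punctured neighborhoods of E*. -/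
open Filter Matrix

/-- The transfer matrix `A_N(E,V) = ∏_{n=1}^N [[E − V(N−n), −1],[1,0]]`,
with the `n = 1` factor leftmost. -/
noncomputable def transferMatrix (V : ℤ → ℝ) (E : ℝ) (N : ℕ) : Matrix (Fin 2) (Fin 2) ℝ :=
  (((List.range N).map
    (fun n => !![E - V ((N : ℤ) - ((n : ℤ) + 1)), -1; (1 : ℝ), 0])).prod)

/-- Operator norm (Euclidean, i.e. ℓ²→ℓ²) of a 2×2 real matrix. -/
noncomputable def opNorm (A : Matrix (Fin 2) (Fin 2) ℝ) : ℝ :=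
  ‖LinearMap.toContinuousLinearMap (Matrix.toEuclideanLin A)‖

/-- `H` is a Schrödinger operator on `ℓ²(ℤ,ℂ)` with potential `V`. -/
def IsSchrodingerOp (V : ℤ → ℝ)
    (H : lp (fun _ : ℤ => ℂ) 2 →L[ℂ] lp (fun _ : ℤ => ℂ) 2) : Prop :=
  ∀ ψ : lp (fun _ : ℤ => ℂ) 2, ∀ n : ℤ,
    H ψ n = ψ (n + 1) + ψ (n - 1) + (V n : ℂ) * ψ n

/-- `V` is `p`-periodic. -/
def IsPeriodic (V : ℤ → ℝ) (p : ℕ) : Prop :=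
  ∀ n : ℤ, V (n + (p : ℤ)) = V n

/-- `V` is limit-periodic: a uniform limit of periodic potentials. -/
def IsLimitPeriodic (V : ℤ → ℝ) : Prop :=
  ∃ (W : ℕ → ℤ → ℝ) (p : ℕ → ℕ),
    (∀ k, 1 ≤ p k ∧ IsPeriodic (W k) (p k)) ∧
    (∀ ε > (0 : ℝ), ∃ K : ℕ, ∀ k ≥ K, ∀ n : ℤ, |V n - W k n| ≤ ε)

/-- `(1/N)·log‖A_N(E,V)‖`. -/
noncomputable def logNormRate (V : ℤ → ℝ) (E : ℝ) (N : ℕ) : ℝ :=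
  (1 / (N : ℝ)) * Real.log (opNorm (transferMatrix V E N))

/-- Individual (upper) Lyapunov exponent `limsup_N (1/N) log‖A_N(E,V)‖`. -/
noncomputable def lyapExp (V : ℤ → ℝ) (E : ℝ) : ℝ :=
  Filter.limsup (fun N : ℕ => logNormRate V E N) Filter.atTop

/-- Bottom of the (real trace of the) spectrum of `H`. -/
noncomputable def specInf (H : lp (fun _ : ℤ => ℂ) 2 →L[ℂ] lp (fun _ : ℤ => ℂ) 2) : ℝ :=
  sInf {x : ℝ | (x : ℂ) ∈ spectrum ℂ H}

section Helpers
open scoped Matrix.Norms.L2Operator Topology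

abbrev M2 := Matrix (Fin 2) (Fin 2) ℝ

lemma opNorm_eq (A : M2) : opNorm A = ‖A‖ := by
  rw [Matrix.l2_opNorm_def]; rfl

/-- square root of the discriminant of the characteristic polynomial -/
noncomputable def dsc (X : M2) : ℝ := Real.sqrt (X.trace ^ 2 - 4 * X.det)
/-- larger eigenvalue -/
noncomputable def lam (X : M2) : ℝ := (X.trace + dsc X) / 2
/-- smaller eigenvalue -/
noncomputable def mu (X : M2) : ℝ := (X.trace - dsc X) / 2
noncomputable def Nm (X : M2) : M2 := X - mu X • (1 : M2)
noncomputable def Np (X : M2) : M2 := X - lam X • (1 : M2)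

lemma cont_trace : Continuous (fun X : M2 => X.trace) := by
  unfold Matrix.trace; fun_prop
lemma cont_dsc : Continuous dsc := by
  unfold dsc
  have h : Continuous (fun X : M2 => X.det) := by
    simp only [Matrix.det_fin_two]; fun_prop
  have := cont_trace
  fun_prop
lemma cont_lam : Continuous lam := by
  have := cont_dsc
  have := cont_trace
  unfold lam; fun_prop
lemma cont_mu : Continuous mu := by
  have := cont_dsc
  have := cont_trace
  unfold mu; fun_prop
lemma cont_Nm : Continuous Nm := by
  have := cont_mu
  unfold Nm; fun_prop
lemma cont_Np : Continuous Np := by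
  have := cont_lam
  unfold Np; fun_prop

lemma cayley (A : M2) : A * A = A.trace • A - A.det • (1 : M2) := by
  ext i j
  fin_cases i <;> fin_cases j <;>
    simp [Matrix.mul_apply, Fin.sum_univ_two, Matrix.trace_fin_two, Matrix.det_fin_two] <;> ring

lemma dsc_sq {A : M2} (h : 0 ≤ A.trace ^ 2 - 4 * A.det) : dsc A ^ 2 = A.trace ^ 2 - 4 * A.det :=
  Real.sq_sqrt h

lemma dsc_nonneg (A : M2) : 0 ≤ dsc A := Real.sqrt_nonneg _

lemma lam_mul_mu {A : M2} (h : 0 ≤ A.trace ^ 2 - 4 * A.det) : lam A * mu A = A.det := by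
  have := dsc_sq h
  unfold lam mu; nlinarith

lemma lam_add_mu (A : M2) : lam A + mu A = A.trace := by unfold lam mu; ring
lemma lam_sub_mu (A : M2) : lam A - mu A = dsc A := by unfold lam mu; ring

lemma mul_Nm {A : M2} (h : 0 ≤ A.trace ^ 2 - 4 * A.det) : A * Nm A = lam A • Nm A := by
  have h1 := lam_mul_mu h
  unfold Nm
  rw [mul_sub, cayley, ← h1, ← lam_add_mu]
  simp only [Matrix.mul_smul, mul_one, smul_sub, smul_smul, add_smul]
  abel

lemma mul_Np {A : M2} (h : 0 ≤ A.trace ^ 2 - 4 * A.det) : A * Np A = mu A • Np A := by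
  have h1 := lam_mul_mu h
  unfold Np
  rw [mul_sub, cayley, ← h1, ← lam_add_mu, mul_comm]
  simp only [Matrix.mul_smul, mul_one, smul_sub, smul_smul, add_smul]
  abel

lemma pow_formula {A : M2} (h : 0 ≤ A.trace ^ 2 - 4 * A.det) (n : ℕ) :
    dsc A • A ^ n = lam A ^ n • Nm A - mu A ^ n • Np A := by
  induction n with
  | zero =>
    simp only [pow_zero, one_smul, Nm, Np, ← lam_sub_mu, sub_smul]; abel
  | succ n ih =>
    rw [pow_succ', ← Matrix.mul_smul, ih, mul_sub, Matrix.mul_smul, Matrix.mul_smul, mul_Nm h,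
      mul_Np h, smul_smul, smul_smul, pow_succ, pow_succ]

section hyp
lemma hyp_disc {A : M2} (hd : A.det = 1) (ht : 2 < A.trace) : 0 < A.trace ^ 2 - 4 * A.det := by rw [hd]; nlinarith
lemma dsc_pos {A : M2} (hd : A.det = 1) (ht : 2 < A.trace) : 0 < dsc A := Real.sqrt_pos.2 (hyp_disc hd ht)
lemma lm_one {A : M2} (hd : A.det = 1) (ht : 2 < A.trace) : lam A * mu A = 1 := by rw [lam_mul_mu (hyp_disc hd ht).le, hd]
lemma lam_pos {A : M2} (hd : A.det = 1) (ht : 2 < A.trace) : 0 < lam A := by have := dsc_pos hd ht; unfold lam; linarith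
lemma mu_pos {A : M2} (hd : A.det = 1) (ht : 2 < A.trace) : 0 < mu A := by
  have := lm_one hd ht
  have := lam_pos hd ht
  by_contra h
  nlinarith
lemma mu_lt_lam {A : M2} (hd : A.det = 1) (ht : 2 < A.trace) : mu A < lam A := by have := lam_sub_mu A; have := dsc_pos hd ht; linarith
lemma mu_lt_one {A : M2} (hd : A.det = 1) (ht : 2 < A.trace) : mu A < 1 := by
  have := lm_one hd ht
  have := mu_pos hd ht
  have := mu_lt_lam hd ht
  by_contra h
  nlinarith
lemma lam_ge {A : M2} (hd : A.det = 1) (ht : 2 < A.trace) : A.trace - 1 ≤ lam A := by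
  have := mu_lt_one hd ht
  have := lam_add_mu A
  linarith
lemma one_lt_lam {A : M2} (hd : A.det = 1) (ht : 2 < A.trace) : 1 < lam A := by
  have := lam_ge hd ht
  linarith
end hyp

/-- openness condition guaranteeing positivity of traces -/
def Th (X Y : M2) : Prop := |(Nm X * Np Y).trace| < (Nm X * Nm Y).trace

lemma Th_pos {X Y : M2} (h : Th X Y) (hd : Y.det = 1) (ht : 2 < Y.trace) (m : ℕ) :
    0 < (Nm X * Y ^ m).trace := by
  have h1 := pow_formula (hyp_disc hd ht).le m
  have h2 : dsc Y * (Nm X * Y ^ m).trace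
      = lam Y ^ m * (Nm X * Nm Y).trace - mu Y ^ m * (Nm X * Np Y).trace := by
    have := congrArg (fun Z => (Nm X * Z).trace) h1
    simpa [mul_sub, Matrix.trace_sub, Matrix.trace_smul] using this
  have h3 : mu Y ^ m ≤ lam Y ^ m := pow_le_pow_left₀ (mu_pos hd ht).le (mu_lt_lam hd ht).le m
  have h4 : 0 < mu Y ^ m := pow_pos (mu_pos hd ht) m
  have h5 := dsc_pos hd ht
  unfold Th at h
  obtain ⟨h6, h7⟩ := abs_lt.1 h
  have h8 : 0 < dsc Y * (Nm X * Y ^ m).trace := by rw [h2]; nlinarith [abs_nonneg (Nm X * Np Y).trace]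
  exact pos_of_mul_pos_right h8 h5.le |>.trans_le le_rfl

lemma dsc_smul {c : ℝ} (hc : 0 ≤ c) (X : M2) : dsc (c • X) = c * dsc X := by
  unfold dsc
  rw [Matrix.trace_smul, Matrix.det_smul]
  simp only [Fintype.card_fin, smul_eq_mul]
  rw [show (c * X.trace) ^ 2 - 4 * (c ^ 2 * X.det) = c ^ 2 * (X.trace ^ 2 - 4 * X.det) by ring,
    Real.sqrt_mul (sq_nonneg c), Real.sqrt_sq hc]

lemma Nm_smul {c : ℝ} (hc : 0 ≤ c) (X : M2) : Nm (c • X) = c • Nm X := by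
  unfold Nm mu
  rw [dsc_smul hc, Matrix.trace_smul, smul_sub, smul_smul, smul_eq_mul]
  congr 2; ring
lemma Np_smul {c : ℝ} (hc : 0 ≤ c) (X : M2) : Np (c • X) = c • Np X := by
  unfold Np lam
  rw [dsc_smul hc, Matrix.trace_smul, smul_sub, smul_smul, smul_eq_mul]
  congr 2; ring

lemma Th_smul {c d : ℝ} (hc : 0 < c) (hd : 0 < d) {X Y : M2} (h : Th (c • X) (d • Y)) :
    Th X Y := by
  unfold Th at *
  rw [Nm_smul hc.le, Nm_smul hd.le, Np_smul hd.le] at h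
  simp only [Matrix.smul_mul, Matrix.mul_smul, Matrix.trace_smul, smul_eq_mul, smul_smul] at h
  rw [abs_mul, abs_of_pos (mul_pos hd hc)] at h
  exact lt_of_mul_lt_mul_left h (mul_pos hd hc).le

lemma Th_open : IsOpen {q : M2 × M2 | Th q.1 q.2} := by
  unfold Th
  have := cont_Nm
  have := cont_Np
  have := cont_trace
  apply isOpen_lt
  · exact ((cont_trace.comp (by fun_prop : Continuous fun q : M2 × M2 => Nm q.1 * Np q.2))).abs
  · exact ((cont_trace.comp (by fun_prop : Continuous fun q : M2 × M2 => Nm q.1 * Nm q.2)))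

lemma Th_self {X : M2} (h : 0 < X.trace ^ 2 - 4 * X.det) : Th X X := by
  have hp : 0 < dsc X := Real.sqrt_pos.2 h
  have h1 := mul_Nm h.le
  have h2 := mul_Np h.le
  have e1 : Nm X * Nm X = dsc X • Nm X := by
    conv_lhs => rw [Nm, sub_mul, ← Nm, h1]
    rw [Matrix.smul_mul, one_mul, ← sub_smul, lam_sub_mu]
  have e2 : Nm X * Np X = 0 := by
    conv_lhs => rw [Nm, sub_mul, h2]
    rw [Matrix.smul_mul, one_mul, sub_self]
  have e3 : (Nm X).trace = dsc X := by
    rw [Nm, Matrix.trace_sub, Matrix.trace_smul, Matrix.trace_one, ← lam_add_mu, ← lam_sub_mu]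
    simp; ring
  unfold Th
  rw [e1, e2, Matrix.trace_smul, e3]
  simp; positivity

lemma trace_Nm (X : M2) : (Nm X).trace = dsc X := by
  rw [Nm, Matrix.trace_sub, Matrix.trace_smul, Matrix.trace_one, ← lam_add_mu, ← lam_sub_mu]
  simp; ring

/-- sequences with `f (m+2) = T f (m+1) - f m`, `T < 2`, `f 0 > 0` become negative -/
lemma rec_neg {f : ℕ → ℝ} {T : ℝ} (hT : T < 2) (h0 : 0 < f 0)
    (hr : ∀ m, f (m + 2) = T * f (m + 1) - f m) : ∃ m, f m < 0 := by
  by_contra! hn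
  have hpos : ∀ m, 0 < f m := by
    intro m
    induction m with
    | zero => exact h0
    | succ k ih =>
      rcases (hn (k + 1)).lt_or_eq with h | h
      · exact h
      · have := hr k
        have := hn (k + 2)
        rw [← h] at *
        linarith
  have hrat : ∀ m : ℕ, f (m + 1) / f m ≤ f 1 / f 0 - m * (2 - T) := by
    intro m
    induction m with
    | zero => simp
    | succ k ih =>
      have h1 := hpos k
      have h2 := hpos (k + 1)
      have e : f (k + 1 + 1) / f (k + 1) = T - f k / f (k + 1) := by
        rw [hr k]; field_simp
      have h3 : 2 ≤ f (k + 1) / f k + f k / f (k + 1) := by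
        rw [div_add_div _ _ h1.ne' h2.ne', le_div_iff₀ (mul_pos h1 h2)]
        nlinarith [sq_nonneg (f (k + 1) - f k)]
      rw [e]; push_cast; linarith
  obtain ⟨m, hm⟩ := exists_nat_gt (f 1 / f 0 / (2 - T))
  rw [div_lt_iff₀ (by linarith)] at hm
  have h1 := hrat m
  have h2 := div_pos (hpos (m + 1)) (hpos m)
  linarith

lemma exists_neg {N A : M2} (hd : A.det = 1) (ht : A.trace < 2) (hN : 0 < N.trace) :
    ∃ m : ℕ, (N * A ^ m).trace < 0 := by
  refine rec_neg (f := fun m => (N * A ^ m).trace) ht (by simpa using hN) ?_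
  intro m
  have : A ^ (m + 2) = A.trace • A ^ (m + 1) - A ^ m := by
    rw [pow_add, pow_two, cayley, hd, mul_sub, Matrix.mul_smul, ← pow_succ]; simp
  simp only [this, mul_sub, Matrix.mul_smul, Matrix.trace_sub, Matrix.trace_smul, smul_eq_mul]

/-- elliptic matrices have bounded powers -/
lemma elliptic_bdd {A : M2} (hd : A.det = 1) (ht : |A.trace| < 2) :
    ∃ C : ℝ, 0 < C ∧ ∀ n : ℕ, ‖A ^ n‖ ≤ C := by
  obtain ⟨h1, h2⟩ := abs_lt.1 ht
  set T := A.trace with hT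
  have key : ∀ n : ℕ, ∃ u v : ℝ, A ^ n = u • A + v • (1 : M2) ∧ u ^ 2 + T * u * v + v ^ 2 = 1 := by
    intro n
    induction n with
    | zero => exact ⟨0, 1, by simp, by ring⟩
    | succ n ih =>
      obtain ⟨u, v, e, q⟩ := ih
      refine ⟨T * u + v, -u, ?_, by linear_combination q⟩
      rw [pow_succ, e, add_mul, Matrix.smul_mul, cayley, hd, ← hT]
      simp only [smul_sub, smul_smul, Matrix.smul_mul, one_mul, add_smul, neg_smul, mul_one,
        mul_comm u T]
      abel
  set K := Real.sqrt (4 / (4 - T ^ 2))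
  have hden : 0 < 4 - T ^ 2 := by nlinarith
  refine ⟨K * ‖A‖ + K * ‖(1 : M2)‖ + 1, by positivity, fun n => ?_⟩
  obtain ⟨u, v, e, q⟩ := key n
  have hu : |u| ≤ K := by
    apply Real.abs_le_sqrt
    rw [le_div_iff₀ hden]
    nlinarith [sq_nonneg (v + T * u / 2)]
  have hv : |v| ≤ K := by
    apply Real.abs_le_sqrt
    rw [le_div_iff₀ hden]
    nlinarith [sq_nonneg (u + T * v / 2)]
  rw [e]
  have := norm_add_le (u • A) (v • (1 : M2))
  rw [norm_smul, norm_smul, Real.norm_eq_abs, Real.norm_eq_abs] at this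
  have := mul_le_mul_of_nonneg_right hu (norm_nonneg A)
  have := mul_le_mul_of_nonneg_right hv (norm_nonneg (1 : M2))
  linarith


lemma lam_pow_le_norm {A : M2} (hd : A.det = 1) (ht : 2 < A.trace) (n : ℕ) :
    lam A ^ n ≤ ‖A ^ n‖ := by
  have h : ∀ n : ℕ, A ^ n * Nm A = lam A ^ n • Nm A := by
    intro n
    induction n with
    | zero => simp
    | succ n ih => rw [pow_succ, mul_assoc, mul_Nm (hyp_disc hd ht).le, Matrix.mul_smul, ih,
        smul_smul, pow_succ, mul_comm]
  have hN : 0 < ‖Nm A‖ := by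
    rw [norm_pos_iff]
    intro h0
    have := trace_Nm A
    rw [h0, Matrix.trace_zero] at this
    have := dsc_pos hd ht
    linarith
  have h2 := norm_mul_le (A ^ n) (Nm A)
  rw [h n, norm_smul, Real.norm_eq_abs, abs_of_pos (pow_pos (lam_pos hd ht) n)] at h2
  exact le_of_mul_le_mul_right h2 hN

lemma one_le_norm {A : M2} (hd : A.det = 1) : 1 ≤ ‖A‖ := by
  have key : ∀ j : Fin 2, A 0 j ^ 2 + A 1 j ^ 2 ≤ ‖A‖ ^ 2 := by
    intro j
    have h := Matrix.l2_opNorm_mulVec A (EuclideanSpace.single j (1 : ℝ))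
    rw [PiLp.norm_single, norm_one, mul_one, EuclideanSpace.norm_eq] at h
    have h2 := pow_le_pow_left₀ (Real.sqrt_nonneg _) h 2
    rw [Real.sq_sqrt (by positivity)] at h2
    simpa [Fin.sum_univ_two] using h2
  have h0 := key 0
  have h1 := key 1
  rw [Matrix.det_fin_two] at hd
  by_contra hlt
  push Not at hlt
  have hn : ‖A‖ ^ 2 < 1 := by nlinarith [norm_nonneg A]
  have hA : (A 0 0 * A 1 1 - A 0 1 * A 1 0) ^ 2
      ≤ (A 0 0 ^ 2 + A 1 0 ^ 2) * (A 0 1 ^ 2 + A 1 1 ^ 2) := by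
    nlinarith [sq_nonneg (A 0 0 * A 0 1 + A 1 0 * A 1 1)]
  rw [hd] at hA
  nlinarith [sq_nonneg (A 0 0), sq_nonneg (A 1 0), sq_nonneg (A 0 1), sq_nonneg (A 1 1)]

/-- one step matrix -/
def stp (x : ℝ) : M2 := !![x, -1; 1, 0]

lemma tm_zero (V : ℤ → ℝ) (E : ℝ) : transferMatrix V E 0 = 1 := by simp [transferMatrix]

lemma tm_succ (V : ℤ → ℝ) (E : ℝ) (N : ℕ) :
    transferMatrix V E (N + 1) = stp (E - V N) * transferMatrix V E N := by
  have key : ∀ (f : ℤ → M2) (l : List ℕ),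
      (List.map f (do let a ← l; pure (a : ℤ))) = List.map (fun a : ℕ => f (a : ℤ)) l := by
    intro f l
    induction l with
    | nil => rfl
    | cons x l ih => simpa using ih
  unfold transferMatrix stp
  rw [key, key, List.range_succ_eq_map, List.map_cons, List.prod_cons, List.map_map]
  congr 2
  · simp
  · congr 1
    funext n
    simp only [Function.comp]
    congr 4
    push_cast; ring_nf

lemma tm_congr {V V' : ℤ → ℝ} {E E' : ℝ} {N : ℕ}
    (h : ∀ n : ℕ, n < N → E - V n = E' - V' n) : transferMatrix V E N = transferMatrix V' E' N := by
  induction N with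
  | zero => simp [tm_zero]
  | succ N ih =>
    rw [tm_succ, tm_succ, ih (fun n hn => h n (by omega)), h N (by omega)]

lemma tm_add (V : ℤ → ℝ) (E : ℝ) (N K : ℕ) :
    transferMatrix V E (N + K) = transferMatrix (fun j => V (j + N)) E K * transferMatrix V E N := by
  induction K with
  | zero => simp [tm_zero]
  | succ K ih =>
    rw [← add_assoc, tm_succ, ih, tm_succ, mul_assoc]
    congr 3
    push_cast; ring_nf

lemma tm_det (V : ℤ → ℝ) (E : ℝ) (N : ℕ) : (transferMatrix V E N).det = 1 := by
  induction N with
  | zero => simp [tm_zero]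
  | succ N ih => rw [tm_succ, Matrix.det_mul, ih, stp, Matrix.det_fin_two_of]; ring

lemma periodic_mul {V : ℤ → ℝ} {p : ℕ} (h : IsPeriodic V p) (k : ℕ) (n : ℤ) :
    V (n + (k * p : ℕ)) = V n := by
  induction k with
  | zero => simp
  | succ k ih =>
    rw [← ih, ← h (n + (k * p : ℕ))]
    congr 1; push_cast; ring

lemma tm_mul {V : ℤ → ℝ} {p : ℕ} (h : IsPeriodic V p) (E : ℝ) (k : ℕ) :
    transferMatrix V E (k * p) = transferMatrix V E p ^ k := by
  induction k with
  | zero => simp [tm_zero]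
  | succ k ih =>
    rw [Nat.succ_mul, tm_add, ih, pow_succ']
    congr 1
    apply tm_congr
    intro n _
    rw [periodic_mul h]

lemma tm_cont (V : ℤ → ℝ) (N : ℕ) : Continuous (fun E => transferMatrix V E N) := by
  induction N with
  | zero => simp only [tm_zero]; exact continuous_const
  | succ N ih =>
    simp only [tm_succ]
    have : Continuous (fun E => stp (E - V N)) := by
      unfold stp
      refine continuous_matrix ?_
      intro i j
      fin_cases i <;> fin_cases j <;> simp <;> fun_prop
    exact this.mul ih

lemma stp_mul_00 (x : ℝ) (A : M2) : (stp x * A) 0 0 = x * A 0 0 - A 1 0 := by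
  simp [stp, Matrix.mul_apply, Fin.sum_univ_two]; ring
lemma stp_mul_01 (x : ℝ) (A : M2) : (stp x * A) 0 1 = x * A 0 1 - A 1 1 := by
  simp [stp, Matrix.mul_apply, Fin.sum_univ_two]; ring
lemma stp_mul_10 (x : ℝ) (A : M2) : (stp x * A) 1 0 = A 0 0 := by
  simp [stp, Matrix.mul_apply, Fin.sum_univ_two]
lemma stp_mul_11 (x : ℝ) (A : M2) : (stp x * A) 1 1 = A 0 1 := by
  simp [stp, Matrix.mul_apply, Fin.sum_univ_two]

lemma tm_analytic (V : ℤ → ℝ) (N : ℕ) (x : ℝ) :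
    ∀ i j : Fin 2, AnalyticAt ℝ (fun E => transferMatrix V E N i j) x := by
  induction N with
  | zero => intro i j; simp only [tm_zero]; exact analyticAt_const
  | succ N ih =>
    simp only [tm_succ]
    have a00 := ih 0 0
    have a01 := ih 0 1
    have a10 := ih 1 0
    have a11 := ih 1 1
    intro i j
    fin_cases i <;> fin_cases j
    · simp only [Fin.zero_eta, stp_mul_00]; fun_prop
    · simp only [Fin.zero_eta, Fin.mk_one, stp_mul_01]; fun_prop
    · simp only [Fin.zero_eta, Fin.mk_one, stp_mul_10]; fun_prop
    · simp only [Fin.mk_one, stp_mul_11]; fun_prop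

/-- norm bound -/
lemma tm_norm_bdd (V : ℤ → ℝ) (E B : ℝ) (hV : ∀ n, |V n| ≤ B) :
    ∃ C : ℝ, 1 ≤ C ∧ ∀ N, ‖transferMatrix V E N‖ ≤ C ^ N := by
  set K : M2 := !![1, 0; 0, 0]
  refine ⟨1 + ‖stp 0‖ + (|E| + B) * ‖K‖, ?_, ?_⟩
  · have : 0 ≤ B := (abs_nonneg _).trans (hV 0)
    have := norm_nonneg (stp 0)
    have : 0 ≤ (|E| + B) * ‖K‖ := by positivity
    linarith
  · intro N
    induction N with
    | zero => rw [tm_zero, pow_zero, norm_one]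
    | succ N ih =>
      rw [tm_succ, pow_succ']
      refine (norm_mul_le _ _).trans (mul_le_mul ?_ ih (norm_nonneg _) ?_)
      · have e : stp (E - V N) = stp 0 + (E - V N) • K := by
          ext i j
          fin_cases i <;> fin_cases j <;> simp [stp, K]
        rw [e]
        have h1 := norm_add_le (stp 0) ((E - V N) • K)
        rw [norm_smul, Real.norm_eq_abs] at h1
        have h2 : |E - V N| ≤ |E| + B := (abs_sub _ _).trans (by linarith [hV N])
        have := mul_le_mul_of_nonneg_right h2 (norm_nonneg K)
        linarith
      · have : 0 ≤ B := (abs_nonneg _).trans (hV 0)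
        positivity

/-- the modified potential -/
noncomputable def modV (V : ℤ → ℝ) (p n m : ℕ) (t : ℝ) : ℤ → ℝ := fun j =>
  V j + if ((n * p : ℕ) : ℤ) ≤ j % (((n + m) * p : ℕ) : ℤ) then t else 0

lemma modV_periodic {V : ℤ → ℝ} {p : ℕ} (h : IsPeriodic V p) (n m : ℕ) (t : ℝ) :
    IsPeriodic (modV V p n m t) ((n + m) * p) := by
  intro j
  unfold modV
  rw [periodic_mul h, Int.add_emod_right]

lemma modV_lt (V : ℤ → ℝ) (p n m : ℕ) (t : ℝ) (j : ℤ) (h0 : 0 ≤ j) (h1 : j < (n * p : ℕ)) :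
    modV V p n m t j = V j := by
  unfold modV
  rw [if_neg, add_zero]
  rw [Int.emod_eq_of_lt h0]
  · omega
  · refine h1.trans_le ?_
    exact_mod_cast Nat.mul_le_mul_right p (by omega)

lemma modV_ge (V : ℤ → ℝ) (p n m : ℕ) (t : ℝ) (j : ℤ) (h0 : (n * p : ℕ) ≤ j)
    (h1 : j < ((n + m) * p : ℕ)) :
    modV V p n m t j = V j + t := by
  unfold modV
  rw [if_pos]
  rw [Int.emod_eq_of_lt (by omega) h1]
  exact h0

lemma modV_sub (V : ℤ → ℝ) (p n m : ℕ) {t : ℝ} (ht : 0 ≤ t) (j : ℤ) :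
    |modV V p n m t j - V j| ≤ t := by
  unfold modV
  split_ifs <;> simp [abs_of_nonneg ht, ht]

lemma tm_modV {V : ℤ → ℝ} {p : ℕ} (h : IsPeriodic V p) (n m : ℕ) (t E : ℝ) :
    transferMatrix (modV V p n m t) E ((n + m) * p)
      = transferMatrix V (E - t) p ^ m * transferMatrix V E p ^ n := by
  rw [add_mul, tm_add, ← tm_mul h, ← tm_mul h]
  congr 1
  · apply tm_congr
    intro j hj
    rw [modV_ge, periodic_mul h]
    · ring
    · omega
    · push_cast at *; nlinarith
  · apply tm_congr
    intro j hj
    rw [modV_lt] <;> omega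

lemma det_Nm {X : M2} (h : 0 ≤ X.trace ^ 2 - 4 * X.det) : (Nm X).det = 0 := by
  have h1 := lam_mul_mu h
  have h2 := lam_add_mu X
  rw [Matrix.det_fin_two] at h1
  rw [Matrix.trace_fin_two] at h2
  have : (Nm X).det = (X 0 0 - mu X) * (X 1 1 - mu X) - X 0 1 * X 1 0 := by
    rw [Matrix.det_fin_two]; simp [Nm]
  rw [this]
  have e : lam X = X 0 0 + X 1 1 - mu X := by linarith
  rw [e] at h1
  linear_combination (-1) * h1

lemma last_zero {f : ℝ → ℝ} (hf : Continuous f) {a b : ℝ} (hab : a < b) (ha : f a < 0)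
    (hb : 0 < f b) : ∃ z, a < z ∧ z < b ∧ f z = 0 ∧ ∀ x, z < x → x ≤ b → 0 < f x := by
  have hc : IsCompact (Set.Icc a b ∩ {x | f x ≤ 0}) :=
    isCompact_Icc.inter_right (isClosed_le hf continuous_const)
  obtain ⟨z, ⟨⟨hz1, hz2⟩, hz3⟩, hmax⟩ := hc.exists_isGreatest ⟨a, ⟨le_rfl, hab.le⟩, ha.le⟩
  have hz3' : f z ≤ 0 := hz3
  have hpos : ∀ x, z < x → x ≤ b → 0 < f x := by
    intro x hx hxb
    by_contra hn
    push Not at hn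
    have := hmax (⟨⟨by linarith, hxb⟩, hn⟩ : x ∈ Set.Icc a b ∩ {x | f x ≤ 0})
    linarith
  have hz0 : f z = 0 := by
    rcases hz3'.lt_or_eq with h | h
    · obtain ⟨y, ⟨hy1, hy2⟩, hy3⟩ := intermediate_value_Icc hz2 hf.continuousOn
        (show (0 : ℝ) ∈ Set.Icc (f z) (f b) from ⟨h.le, hb.le⟩)
      rcases hy1.lt_or_eq with h' | h'
      · have := hpos y h' hy2; linarith
      · rw [h', hy3] at h; linarith
    · exact h
  refine ⟨z, lt_of_le_of_ne hz1 ?_, lt_of_le_of_ne hz2 ?_, hz0, hpos⟩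
  · rintro rfl; linarith
  · rintro rfl; linarith

lemma ev_geom {q r : ℝ} (hq : 0 < q) (hqr : q < r) (M : ℝ) :
    ∀ᶠ n : ℕ in atTop, M * q ^ n ≤ r ^ n := by
  have h1 : 1 < r / q := (one_lt_div hq).2 hqr
  filter_upwards [(tendsto_pow_atTop_atTop_of_one_lt h1).eventually_ge_atTop M] with n hn
  rw [div_pow, le_div_iff₀ (pow_pos hq n)] at hn
  exact hn

structure St where
  V : ℤ → ℝ
  p : ℕ
  z : ℝ
  a : ℝ
  b : ℝ
  F : Set (ℝ × ℝ)

structure SInv (γ : ℝ) (S : St) : Prop where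
  p1 : 1 ≤ S.p
  per : IsPeriodic S.V S.p
  za : S.z < S.a
  ab : 2 * S.a - S.z ≤ S.b
  tz : (transferMatrix S.V S.z S.p).trace < 2
  hyp : ∃ γ', γ < γ' ∧ ∀ x, S.a ≤ x → x ≤ S.b →
    Real.exp (γ' * S.p) + 1 ≤ (transferMatrix S.V x S.p).trace
  th : Th (transferMatrix S.V S.b S.p) (transferMatrix S.V (S.b - (S.a - S.z)) S.p)
  fin : S.F.Finite
  sm : ∀ q ∈ S.F, ∃ s', s' < q.2 ∧ ∃ C : ℝ, ∀ n : ℕ,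
    ‖transferMatrix S.V q.1 S.p ^ n‖ ≤ C * Real.exp (s' * S.p) ^ n

structure SRel (η : ℝ) (S S' : St) : Prop where
  pp : S.p < S'.p
  eqV : ∀ n : ℤ, 0 ≤ n → n ≤ S.p → S'.V n = S.V n
  near : ∀ n : ℤ, |S'.V n - S.V n| ≤ S.a - S.z
  aa : S.a ≤ S'.a
  bb : S'.b ≤ S.b
  len : S'.b - S'.z ≤ η
  mem : (S'.z, η) ∈ S'.F
  sub : S.F ⊆ S'.F
  bd : ∀ q ∈ S.F, ‖transferMatrix S'.V q.1 S'.p‖ ≤ Real.exp (q.2 * S'.p)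

lemma step {γ : ℝ} (hγ : 0 < γ) (S : St) (hS : SInv γ S) (η : ℝ) (hη : 0 < η) :
    ∃ S', SInv γ S' ∧ SRel η S S' := by
  obtain ⟨V, p, z, a, b, F⟩ := S
  obtain ⟨p1, per, za, ab, tz, ⟨γ', hγ', hyp⟩, th, fin, sm⟩ := hS
  simp only at p1 per za ab tz hyp th fin sm
  set A : ℝ → M2 := fun E => transferMatrix V E p with hA
  have hAc : Continuous A := tm_cont V p
  have hdet : ∀ x, (A x).det = 1 := fun x => tm_det V x p
  set t := a - z with ht
  have htpos : 0 < t := by linarith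
  have hpR : (0 : ℝ) < p := by exact_mod_cast p1
  have hexp : 1 < Real.exp (γ' * p) := by
    rw [Real.one_lt_exp_iff]; exact mul_pos (hγ.trans hγ') hpR
  have hT : ∀ x, a ≤ x → x ≤ b → 2 < (A x).trace := fun x h1 h2 => by
    have := hyp x h1 h2
    change 2 < (transferMatrix V x p).trace
    linarith
  have hlam : ∀ x, a ≤ x → x ≤ b → Real.exp (γ' * p) ≤ lam (A x) := fun x h1 h2 => by
    have h3 := hyp x h1 h2
    have h4 := lam_ge (hdet x) (hT x h1 h2)
    change _ ≤ (A x).trace at h3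
    linarith
  have hablt : a < b := by linarith
  obtain ⟨m, hm⟩ : ∃ m : ℕ, (Nm (A a) * A z ^ m).trace < 0 := by
    apply exists_neg (hdet z) tz
    rw [trace_Nm]
    exact dsc_pos (hdet a) (hT a le_rfl hablt.le)
  set B : ℝ → M2 := fun x => A (x - t) ^ m with hB
  have hBc : Continuous B := by fun_prop
  have hNc : Continuous (fun x => Nm (A x)) := cont_Nm.comp hAc
  have hNpc : Continuous (fun x => Np (A x)) := cont_Np.comp hAc
  set X : ℝ → M2 := fun x => B x * Nm (A x) with hX
  have hXc : Continuous X := hBc.mul hNc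
  set G : ℝ → ℝ := fun x => (X x).trace with hG
  have hGc : Continuous G := cont_trace.comp hXc
  set H : ℝ → ℝ := fun x => (B x * Np (A x)).trace with hH
  have hHc : Continuous H := cont_trace.comp (hBc.mul hNpc)
  have hGa : G a < 0 := by
    have : a - t = z := by rw [ht]; ring
    simp only [hG, hX, hB, this]
    rw [Matrix.trace_mul_comm]; exact hm
  have hGb : 0 < G b := by
    simp only [hG, hX, hB]
    rw [Matrix.trace_mul_comm]
    exact Th_pos th (hdet _) (hT _ (by linarith) (by linarith)) m
  obtain ⟨z', hz1, hz2, hz0, hzpos⟩ := last_zero hGc hablt hGa hGb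
  set b' := min b (z' + η) with hb'
  have hb'1 : b' ≤ b := min_le_left _ _
  have hb'2 : b' ≤ z' + η := min_le_right _ _
  have hb'3 : z' < b' := lt_min hz2 (by linarith)
  have hthX : Th (X b') (X b') := by
    apply Th_self
    have h1 : (X b').det = 0 := by
      simp only [hX]
      rw [Matrix.det_mul, det_Nm (hyp_disc (hdet b') (hT b' (by linarith) hb'1)).le, mul_zero]
    have h2 : 0 < (X b').trace := hzpos b' hb'3 hb'1
    rw [h1]; nlinarith
  obtain ⟨τ, hτ0, hτ1, hτ2⟩ : ∃ τ > 0, 2 * τ ≤ b' - z' ∧ Th (X b') (X (b' - τ)) := by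
    have hc : Continuous (fun τ : ℝ => (X b', X (b' - τ))) := by fun_prop
    have ho := (Th_open.preimage hc).mem_nhds (show (0 : ℝ) ∈ _ by simpa using hthX)
    obtain ⟨e, he, hball⟩ := Metric.mem_nhds_iff.1 ho
    refine ⟨min (e / 2) ((b' - z') / 2), lt_min (by linarith) (by linarith), ?_, ?_⟩
    · have := min_le_right (e / 2) ((b' - z') / 2)
      linarith
    · refine @hball (min (e / 2) ((b' - z') / 2)) ?_
      rw [Metric.mem_ball, dist_zero_right, Real.norm_eq_abs, abs_of_pos (lt_min (by linarith) (by linarith))]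
      have := min_le_left (e / 2) ((b' - z') / 2)
      linarith
  set A' : ℕ → ℝ → M2 := fun n x => B x * A x ^ n with hA'
  -- trace formula
  have formula : ∀ x, a ≤ x → x ≤ b → ∀ n,
      dsc (A x) • A' n x = lam (A x) ^ n • X x - mu (A x) ^ n • (B x * Np (A x)) := by
    intro x h1 h2 n
    have := pow_formula (hyp_disc (hdet x) (hT x h1 h2)).le n
    simp only [hA', hX]
    rw [← Matrix.mul_smul, this, mul_sub, Matrix.mul_smul, Matrix.mul_smul]
  have tformula : ∀ x, a ≤ x → x ≤ b → ∀ n,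
      dsc (A x) * (A' n x).trace = lam (A x) ^ n * G x - mu (A x) ^ n * H x := by
    intro x h1 h2 n
    have := congrArg Matrix.trace (formula x h1 h2 n)
    simpa [Matrix.trace_sub, Matrix.trace_smul] using this
  -- c1
  have c1 : ∀ᶠ n : ℕ in atTop, |(A' n z').trace| < 2 := by
    have hd := dsc_pos (hdet z') (hT z' hz1.le hz2.le)
    have hlim : Tendsto (fun n : ℕ => mu (A z') ^ n * H z') atTop (𝓝 (0 * H z')) :=
      (tendsto_pow_atTop_nhds_zero_of_lt_one (mu_pos (hdet z') (hT z' hz1.le hz2.le)).le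
        (mu_lt_one (hdet z') (hT z' hz1.le hz2.le))).mul_const _
    rw [zero_mul] at hlim
    have hl2 := hlim.abs
    rw [abs_zero] at hl2
    filter_upwards [hl2.eventually_lt_const (show 0 < 2 * dsc (A z') by linarith)] with n hn
    have e := tformula z' hz1.le hz2.le n
    rw [hz0, mul_zero, zero_sub] at e
    have : dsc (A z') * |(A' n z').trace| = |mu (A z') ^ n * H z'| := by
      rw [← abs_neg (mu (A z') ^ n * H z'), ← e, abs_mul, abs_of_pos hd]
    rw [← this] at hn
    by_contra hcon
    push Not at hcon
    nlinarith
  -- c2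
  set γ2 := (γ + γ') / 2 with hγ2
  have c2 : ∀ᶠ n : ℕ in atTop, ∀ x, z' + τ ≤ x → x ≤ b' →
      Real.exp (γ2 * ((n + m) * p : ℕ)) + 1 ≤ (A' n x).trace := by
    have hcomp : IsCompact (Set.Icc (z' + τ) b') := isCompact_Icc
    have hne : (Set.Icc (z' + τ) b').Nonempty := ⟨z' + τ, le_rfl, by linarith⟩
    obtain ⟨x0, ⟨hx01, hx02⟩, hx0⟩ := hcomp.exists_isMinOn hne hGc.continuousOn
    obtain ⟨x1, _, hx1⟩ := hcomp.exists_isMaxOn hne (hHc.abs).continuousOn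
    obtain ⟨x2, _, hx2⟩ := hcomp.exists_isMaxOn hne (cont_dsc.comp hAc).continuousOn
    have hg0 : 0 < G x0 := hzpos x0 (by linarith) (by linarith)
    set g0 := G x0
    set K := max (|H x1|) (dsc (A x2)) with hK
    set q := Real.exp (γ2 * p)
    set r := Real.exp (γ' * p)
    have hqr : q < r := Real.exp_lt_exp.2 (mul_lt_mul_of_pos_right (by linarith) hpR)
    have hq1 : 1 < q := Real.one_lt_exp_iff.2 (mul_pos (by linarith) hpR)
    filter_upwards [ev_geom (by linarith) hqr ((K * q ^ m + 2 * K) / g0)] with n hn x hxa hxb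
    have hxa' : a ≤ x := by linarith
    have hxb' : x ≤ b := by linarith
    have e := tformula x hxa' hxb' n
    have hd := dsc_pos (hdet x) (hT x hxa' hxb')
    have h1 : g0 ≤ G x := hx0 ⟨hxa, hxb⟩
    have h2 : |H x| ≤ K := le_trans (hx1 ⟨hxa, hxb⟩) (le_max_left _ _)
    have h3 : dsc (A x) ≤ K := le_trans (hx2 ⟨hxa, hxb⟩) (le_max_right _ _)
    have hK0 : 0 < K := by linarith
    have h4 : r ^ n ≤ lam (A x) ^ n := pow_le_pow_left₀ (Real.exp_pos _).le (hlam x hxa' hxb') n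
    have h5 : mu (A x) ^ n ≤ 1 := pow_le_one₀ (mu_pos (hdet x) (hT x hxa' hxb')).le
      (mu_lt_one (hdet x) (hT x hxa' hxb')).le
    have h5' : 0 < mu (A x) ^ n := pow_pos (mu_pos (hdet x) (hT x hxa' hxb')) n
    have h6 : mu (A x) ^ n * H x ≤ K := by
      calc mu (A x) ^ n * H x ≤ mu (A x) ^ n * |H x| :=
            mul_le_mul_of_nonneg_left (le_abs_self _) h5'.le
        _ ≤ 1 * K := mul_le_mul h5 h2 (abs_nonneg _) zero_le_one
        _ = K := one_mul K
    have hqn : 1 ≤ q ^ n := one_le_pow₀ hq1.le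
    have h7 : K * q ^ m * q ^ n + 2 * K ≤ r ^ n * g0 := by
      rw [div_mul_eq_mul_div, div_le_iff₀ hg0] at hn
      nlinarith
    have h8 : r ^ n * g0 ≤ lam (A x) ^ n * G x :=
      mul_le_mul h4 h1 hg0.le (pow_pos (lam_pos (hdet x) (hT x hxa' hxb')) n).le
    have h9 : K * (q ^ m * q ^ n + 1) ≤ dsc (A x) * (A' n x).trace := by
      rw [e]; linarith
    have h10 : 0 < (A' n x).trace := by
      have : 0 < dsc (A x) * (A' n x).trace := lt_of_lt_of_le (by positivity) h9
      exact pos_of_mul_pos_right this hd.le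
    have h11 : K * (q ^ m * q ^ n + 1) ≤ K * (A' n x).trace :=
      h9.trans (mul_le_mul_of_nonneg_right h3 h10.le)
    have h12 := le_of_mul_le_mul_left h11 hK0
    have h13 : Real.exp (γ2 * ((n + m) * p : ℕ)) = q ^ m * q ^ n := by
      rw [← Real.exp_nat_mul, ← Real.exp_nat_mul, ← Real.exp_add]
      congr 1; push_cast; ring
    rw [h13]; exact h12
  -- c3
  have c3 : ∀ᶠ n : ℕ in atTop, ∀ q ∈ F, ∃ s', s' < q.2 ∧
      ‖A' n q.1‖ ≤ Real.exp (s' * ((n + m) * p : ℕ)) := by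
    rw [Filter.eventually_all_finite fin]
    intro q hq
    obtain ⟨s', hs', C, hC⟩ := sm q hq
    set s2 := (s' + q.2) / 2 with hs2
    have hlt : Real.exp (s' * p) < Real.exp (s2 * p) :=
      Real.exp_lt_exp.2 (mul_lt_mul_of_pos_right (by linarith) hpR)
    set r := Real.exp (s2 * p)
    have hr : 0 < r := Real.exp_pos _
    filter_upwards [ev_geom (Real.exp_pos _) hlt (‖B q.1‖ * C / r ^ m)] with n hn
    refine ⟨s2, by linarith, ?_⟩
    have h13 : Real.exp (s2 * ((n + m) * p : ℕ)) = r ^ n * r ^ m := by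
      rw [← Real.exp_nat_mul, ← Real.exp_nat_mul, ← Real.exp_add]
      congr 1; push_cast; ring
    rw [h13]
    rw [div_mul_eq_mul_div, div_le_iff₀ (pow_pos hr m)] at hn
    refine le_trans ?_ hn
    rw [mul_assoc]
    exact (norm_mul_le _ _).trans (mul_le_mul_of_nonneg_left (hC n) (norm_nonneg _))
  -- c4
  have lim : ∀ x, a ≤ x → x ≤ b →
      Tendsto (fun n : ℕ => (mu (A x) ^ n * dsc (A x)) • A' n x) atTop (𝓝 (X x)) := by
    intro x h1 h2
    have hμ := mu_pos (hdet x) (hT x h1 h2)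
    have hμ1 := mu_lt_one (hdet x) (hT x h1 h2)
    have e : ∀ n : ℕ, (mu (A x) ^ n * dsc (A x)) • A' n x
        = X x - ((mu (A x) ^ 2) ^ n) • (B x * Np (A x)) := by
      intro n
      rw [mul_smul, formula x h1 h2 n, smul_sub, smul_smul, smul_smul, ← mul_pow, ← mul_pow,
        mul_comm (mu _) (lam _), lm_one (hdet x) (hT x h1 h2), one_pow, one_smul, pow_two]
    simp only [e]
    have hl : Tendsto (fun n : ℕ => (mu (A x) ^ 2) ^ n) atTop (𝓝 0) :=
      tendsto_pow_atTop_nhds_zero_of_lt_one (by positivity) (by nlinarith)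
    have := (tendsto_const_nhds (x := X x)).sub (hl.smul_const (B x * Np (A x)))
    simpa using this
  have c4 : ∀ᶠ n : ℕ in atTop, Th (A' n b') (A' n (b' - τ)) := by
    have hb1 : a ≤ b' := by linarith
    have hy1 : a ≤ b' - τ := by linarith
    have hy2 : b' - τ ≤ b := by linarith
    have hl := (lim b' hb1 hb'1).prodMk_nhds (lim (b' - τ) hy1 hy2)
    filter_upwards [hl.eventually (Th_open.mem_nhds hτ2)] with n hn
    refine Th_smul ?_ ?_ hn
    · exact mul_pos (pow_pos (mu_pos (hdet _) (hT _ hb1 hb'1)) _) (dsc_pos (hdet _) (hT _ hb1 hb'1))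
    · exact mul_pos (pow_pos (mu_pos (hdet _) (hT _ hy1 hy2)) _) (dsc_pos (hdet _) (hT _ hy1 hy2))
  obtain ⟨n, d1, d2, d3, d4, d5⟩ :=
    (c1.and (c2.and (c3.and (c4.and (eventually_ge_atTop 2))))).exists
  have hmod : ∀ x, transferMatrix (modV V p n m t) x ((n + m) * p) = A' n x :=
    fun x => tm_modV per n m t x
  have hp' : p < (n + m) * p := by nlinarith
  refine ⟨⟨modV V p n m t, (n + m) * p, z', z' + τ, b', insert (z', η) F⟩, ?_, ?_⟩
  · refine ⟨?_, modV_periodic per n m t, ?_, ?_, ?_, ⟨γ2, ?_, ?_⟩, ?_, fin.insert _, ?_⟩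
    · simp only; omega
    · simp only; linarith
    · simp only; linarith
    · simp only [hmod]; exact (abs_lt.1 d1).2
    · linarith
    · intro x hx1 hx2
      simp only [hmod]; exact d2 x hx1 hx2
    · simp only [hmod, add_sub_cancel_left]; exact d4
    · intro q hq
      simp only [hmod]
      rcases hq with rfl | hq
      · obtain ⟨C, hC0, hC⟩ := elliptic_bdd (hmod z' ▸ tm_det _ _ _) d1
        refine ⟨0, hη, C, fun k => ?_⟩
        simpa using hC k
      · obtain ⟨s', hs', hle⟩ := d3 q hq
        refine ⟨s', hs', 1, fun k => ?_⟩
        rw [one_mul]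
        exact (norm_pow_le _ k).trans (pow_le_pow_left₀ (norm_nonneg _) hle k)
  · refine ⟨hp', ?_, ?_, ?_, hb'1, ?_, Set.mem_insert _ _, Set.subset_insert _ _, ?_⟩
    · intro j hj0 hj1
      apply modV_lt _ _ _ _ _ _ hj0
      simp only at hj1
      have : p < n * p := by nlinarith
      omega
    · exact modV_sub V p n m htpos.le
    · simp only; linarith
    · simp only; linarith
    · intro q hq
      simp only [hmod]
      obtain ⟨s', hs', hle⟩ := d3 q hq
      exact hle.trans (Real.exp_le_exp.2 (mul_le_mul_of_nonneg_right hs'.le (Nat.cast_nonneg _)))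

lemma tm00 (V : ℤ → ℝ) (E : ℝ) (N : ℕ) : transferMatrix V E (N + 1) 0 0
    = (E - V N) * transferMatrix V E N 0 0 - transferMatrix V E N 1 0 := by
  rw [tm_succ, stp_mul_00]
lemma tm01 (V : ℤ → ℝ) (E : ℝ) (N : ℕ) : transferMatrix V E (N + 1) 0 1
    = (E - V N) * transferMatrix V E N 0 1 - transferMatrix V E N 1 1 := by
  rw [tm_succ, stp_mul_01]
lemma tm10 (V : ℤ → ℝ) (E : ℝ) (N : ℕ) : transferMatrix V E (N + 1) 1 0
    = transferMatrix V E N 0 0 := by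
  rw [tm_succ, stp_mul_10]
lemma tm11 (V : ℤ → ℝ) (E : ℝ) (N : ℕ) : transferMatrix V E (N + 1) 1 1
    = transferMatrix V E N 0 1 := by
  rw [tm_succ, stp_mul_11]

lemma tm_large {V : ℤ → ℝ} {E : ℝ} (h : ∀ n, 4 ≤ E - V n) (N : ℕ) :
    1 ≤ transferMatrix V E N 0 0 + transferMatrix V E N 0 1 ∧
    transferMatrix V E N 1 0 + transferMatrix V E N 1 1
      ≤ transferMatrix V E N 0 0 + transferMatrix V E N 0 1 ∧
    transferMatrix V E N 0 1 ≤ transferMatrix V E N 1 1 ∧ transferMatrix V E N 0 1 ≤ 0 := by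
  induction N with
  | zero => simp [tm_zero]
  | succ N ih =>
    rw [tm00, tm01, tm10, tm11]
    have hx := h N
    generalize E - V N = x at *
    obtain ⟨h1, h2, h3, h4⟩ := ih
    refine ⟨?_, ?_, ?_, ?_⟩ <;> nlinarith

lemma tm_large_trace {V : ℤ → ℝ} {E : ℝ} (h : ∀ n, 4 ≤ E - V n) {N : ℕ} (hN : 1 ≤ N) :
    2 < (transferMatrix V E N).trace := by
  obtain ⟨k, rfl⟩ : ∃ k, N = k + 1 := ⟨N - 1, by omega⟩
  rw [Matrix.trace_fin_two, tm00, tm11]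
  have hx := h k
  generalize E - V k = x at *
  obtain ⟨h1, h2, h3, h4⟩ := tm_large h k
  nlinarith

lemma tm_large_pos {V : ℤ → ℝ} {E : ℝ} (h : ∀ n, 4 ≤ E - V n) (N : ℕ) :
    0 < transferMatrix V E N 0 0 := by
  obtain ⟨h1, h2, h3, h4⟩ := tm_large h N
  linarith

lemma periodic_bdd {V : ℤ → ℝ} {p : ℕ} (hp : 1 ≤ p) (h : IsPeriodic V p) :
    ∃ B, ∀ n, |V n| ≤ B := by
  refine ⟨∑ i ∈ Finset.range p, |V i|, fun n => ?_⟩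
  have hmod : V n = V (n % p) := by
    have hper : Function.Periodic V (p : ℤ) := h
    rw [Int.emod_def, mul_comm]
    exact (hper.sub_int_mul_eq (n / p)).symm
  have h0 : 0 ≤ n % (p : ℤ) := Int.emod_nonneg _ (by omega)
  have h1 : n % (p : ℤ) < p := Int.emod_lt_of_pos _ (by omega)
  obtain ⟨k, hk⟩ := Int.eq_ofNat_of_zero_le h0
  rw [hmod, hk]
  rw [hk] at h1
  exact Finset.single_le_sum (f := fun i : ℕ => |V i|) (fun i _ => abs_nonneg _)
    (Finset.mem_range.2 (by exact_mod_cast h1))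

lemma entry_cont (V : ℤ → ℝ) (N : ℕ) (i j : Fin 2) :
    Continuous (fun E => transferMatrix V E N i j) :=
  continuous_iff_continuousAt.2 fun x => (tm_analytic V N x i j).continuousAt

lemma exists_trace_nonpos {V : ℤ → ℝ} {p : ℕ} (hp : 1 ≤ p) {B : ℝ} (hB : ∀ n, |V n| ≤ B) :
    ∃ e, (transferMatrix V e p).trace ≤ 0 := by
  set S : Set ℝ := {E | ∀ n, n ≤ p → 0 < transferMatrix V E n 0 0} with hS
  have hne : S.Nonempty := by
    refine ⟨B + 4, fun n _ => tm_large_pos (fun k => ?_) n⟩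
    have := (abs_le.1 (hB k)).2
    linarith
  have hbd : BddBelow S := by
    refine ⟨V 0, fun E hE => ?_⟩
    have := hE (0 + 1) hp
    rw [tm00, tm_zero] at this
    simp at this
    linarith
  set e := sInf S
  have hcl : e ∈ closure S := csInf_mem_closure hne hbd
  have hge : ∀ n, n ≤ p → 0 ≤ transferMatrix V e n 0 0 := by
    intro n hn
    have hc : IsClosed {E | 0 ≤ transferMatrix V E n 0 0} :=
      isClosed_le continuous_const (entry_cont V n 0 0)
    exact closure_minimal (fun E hE => (hE n hn).le) hc hcl
  have hex : ∃ n, n ≤ p ∧ transferMatrix V e n 0 0 = 0 := by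
    by_contra! hcon
    have hev : ∀ᶠ E in 𝓝 e, E ∈ S := by
      have : ∀ n ∈ Finset.range (p + 1), ∀ᶠ E in 𝓝 e, 0 < transferMatrix V E n 0 0 := by
        intro n hn
        have hn' : n ≤ p := by simpa [Nat.lt_succ_iff] using hn
        exact (entry_cont V n 0 0).continuousAt.eventually_const_lt
          (lt_of_le_of_ne (hge n hn') (hcon n hn').symm)
      have := (Filter.eventually_all_finset _).2 this
      filter_upwards [this] with E hE n hn
      exact hE n (by simpa [Nat.lt_succ_iff] using hn)
    obtain ⟨δ, hδ, hball⟩ := Metric.eventually_nhds_iff.1 hev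
    have : e - δ / 2 ∈ S := hball (by
      rw [Real.dist_eq]; rw [show e - δ / 2 - e = -(δ / 2) by ring, abs_neg, abs_of_pos] <;> linarith)
    have := csInf_le hbd this
    linarith
  classical
  set n := Nat.find hex
  obtain ⟨hn1, hn2⟩ : n ≤ p ∧ transferMatrix V e n 0 0 = 0 := Nat.find_spec hex
  have hmin : ∀ k, k < n → 0 < transferMatrix V e k 0 0 := by
    intro k hk
    have h1 := Nat.find_min hex hk
    have hkp : k ≤ p := by omega
    refine lt_of_le_of_ne (hge k hkp) (fun h => h1 ⟨hkp, h.symm⟩)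
  have hn0 : n ≠ 0 := by
    intro h0
    rw [h0, tm_zero] at hn2
    simp at hn2
  obtain ⟨k, hk⟩ : ∃ k, n = k + 1 := ⟨n - 1, by omega⟩
  have hnp : n = p := by
    by_contra hne'
    have h1 := hge (n + 1) (by omega)
    rw [tm00, hn2, hk, tm10] at h1
    have := hmin k (by omega)
    simp at h1
    linarith
  have hb : ∀ j, j < n → transferMatrix V e j 0 1 ≤ 0 := by
    intro j
    induction j with
    | zero => intro _; simp [tm_zero]
    | succ j ih =>
      intro hj
      have h1 := ih (by omega)
      have h2 := hmin j (by omega)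
      have h3 := hmin (j + 1) hj
      have h4 := tm_det V e (j + 1)
      rw [Matrix.det_fin_two, tm10, tm11] at h4
      by_contra hcon
      push Not at hcon
      have := mul_pos hcon h2
      have := mul_nonpos_of_nonneg_of_nonpos h3.le h1
      linarith
  refine ⟨e, ?_⟩
  rw [Matrix.trace_fin_two, ← hnp, hn2, hk, tm11, zero_add]
  exact hb k (by omega)

lemma base {V : ℤ → ℝ} {p : ℕ} (hp : 1 ≤ p) (per : IsPeriodic V p) (η : ℝ) (hη : 0 < η) :
    ∃ γ > 0, ∃ S, SInv γ S ∧ S.V = V ∧ S.b - S.z ≤ η := by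
  obtain ⟨B, hB⟩ := periodic_bdd hp per
  obtain ⟨e, he⟩ := exists_trace_nonpos hp hB
  set T : ℝ → ℝ := fun E => (transferMatrix V E p).trace with hTdef
  have hTc : Continuous T := cont_trace.comp (tm_cont V p)
  have hTa : ∀ x, AnalyticAt ℝ T x := by
    intro x
    simp only [hTdef, Matrix.trace_fin_two]
    exact (tm_analytic V p x 0 0).add (tm_analytic V p x 1 1)
  obtain ⟨d, hed, hd⟩ : ∃ d, e < d ∧ 2 < T d := by
    refine ⟨max (B + 4) (e + 1), lt_of_lt_of_le (by linarith) (le_max_right _ _), ?_⟩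
    apply tm_large_trace _ hp
    intro n
    have h1 := (abs_le.1 (hB n)).2
    have h2 := le_max_left (B + 4) (e + 1)
    linarith
  set R : Set ℝ := {x | x ∈ Set.Icc e d ∧ T x < 2} with hR
  have hRne : R.Nonempty := ⟨e, ⟨le_rfl, hed.le⟩, by change T e ≤ 0 at he; linarith⟩
  have hRbd : BddAbove R := ⟨d, fun x hx => hx.1.2⟩
  set E0 := sSup R with hE0
  have hlub : IsLUB R E0 := isLUB_csSup hRne hRbd
  have hcl : E0 ∈ closure R := csSup_mem_closure hRne hRbd
  have hE0d : E0 ≤ d := csSup_le hRne fun x hx => hx.1.2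
  have hTE0 : T E0 ≤ 2 :=
    closure_minimal (fun x hx => le_of_lt hx.2) (isClosed_le hTc continuous_const) hcl
  have hE0lt : E0 < d := lt_of_le_of_ne hE0d (fun h => by rw [h] at hTE0; linarith)
  have heE0 : e ≤ E0 := hlub.1 (⟨⟨le_rfl, hed.le⟩, by change T e ≤ 0 at he; linarith⟩ : e ∈ R)
  have hright : ∀ x, E0 < x → x ≤ d → 2 ≤ T x := by
    intro x h1 h2
    by_contra hcon
    push Not at hcon
    have := hlub.1 (⟨⟨by linarith, h2⟩, hcon⟩ : x ∈ R)
    linarith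
  obtain ⟨κ, hκ, hκT⟩ : ∃ κ > 0, ∀ x, E0 < x → x < E0 + κ → 2 < T x := by
    rcases (hTa E0).eventually_eq_or_eventually_ne (analyticAt_const (v := (2 : ℝ))) with h | h
    · exfalso
      obtain ⟨x, hx1, hx2⟩ := mem_closure_iff_nhds.1 hcl _ h
      have : T x = 2 := hx1
      have := hx2.2
      linarith
    · rw [eventually_nhdsWithin_iff] at h
      obtain ⟨δ, hδ, hball⟩ := Metric.eventually_nhds_iff.1 h
      refine ⟨min δ (d - E0), lt_min hδ (by linarith), fun x h1 h2 => ?_⟩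
      have m1 := min_le_left δ (d - E0)
      have m2 := min_le_right δ (d - E0)
      refine lt_of_le_of_ne (hright x h1 (by linarith)) (Ne.symm (hball ?_ ?_))
      · rw [Real.dist_eq, abs_of_pos] <;> linarith
      · simp only [Set.mem_compl_iff, Set.mem_singleton_iff]; exact h1.ne'
  set b := E0 + min (κ / 2) (η / 2) with hb
  have hb0 : E0 < b := by
    have : 0 < min (κ / 2) (η / 2) := lt_min (by linarith) (by linarith)
    linarith
  have hb1 : b ≤ E0 + κ / 2 := by have := min_le_left (κ / 2) (η / 2); linarith
  have hb2 : b ≤ E0 + η / 2 := by have := min_le_right (κ / 2) (η / 2); linarith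
  have hth : Th (transferMatrix V b p) (transferMatrix V b p) :=
    Th_self (hyp_disc (tm_det V b p) (hκT b hb0 (by linarith)))
  have hc : Continuous (fun τ : ℝ => (transferMatrix V b p, transferMatrix V (b - τ) p)) :=
    continuous_const.prodMk ((tm_cont V p).comp (by fun_prop))
  have ho := (Th_open.preimage hc).mem_nhds (show (0 : ℝ) ∈ _ by simpa using hth)
  obtain ⟨δ, hδ, hball⟩ := Metric.mem_nhds_iff.1 ho
  obtain ⟨τ, hτ, hτ1, hτ2, hτ3⟩ : ∃ τ > 0, 2 * τ ≤ δ ∧ 3 * τ ≤ b - E0 ∧ 2 * τ ≤ η := by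
    refine ⟨min (δ / 2) (min ((b - E0) / 3) (η / 2)),
      lt_min (by linarith) (lt_min (by linarith) (by linarith)), ?_, ?_, ?_⟩
    · have := min_le_left (δ / 2) (min ((b - E0) / 3) (η / 2)); linarith
    · have := (min_le_right (δ / 2) (min ((b - E0) / 3) (η / 2))).trans (min_le_left _ _)
      linarith
    · have := (min_le_right (δ / 2) (min ((b - E0) / 3) (η / 2))).trans (min_le_right _ _)
      linarith
  obtain ⟨z, hzR, hz1⟩ := exists_lt_of_lt_csSup hRne (show E0 - τ < sSup R by linarith)
  have hz2 : z ≤ E0 := hlub.1 hzR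
  have hzT : T z < 2 := hzR.2
  obtain ⟨x0, ⟨hx1, hx2⟩, hx0⟩ := (isCompact_Icc (a := E0 + τ) (b := b)).exists_isMinOn
    ⟨b, by linarith, le_rfl⟩ hTc.continuousOn
  have hTm : 2 < T x0 := hκT x0 (by linarith) (by linarith)
  have hpR : (0 : ℝ) < p := by exact_mod_cast hp
  have hlog : 0 < Real.log (T x0 - 1) / p := div_pos (Real.log_pos (by linarith)) hpR
  refine ⟨Real.log (T x0 - 1) / p / 2, by linarith, ⟨V, p, z, E0 + τ, b, ∅⟩, ?_, rfl, ?_⟩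
  · refine ⟨hp, per, ?_, ?_, hzT, ⟨Real.log (T x0 - 1) / p, by linarith, ?_⟩, ?_,
      Set.finite_empty, ?_⟩
    · simp only; linarith
    · simp only; linarith
    · intro x h1 h2
      simp only
      rw [div_mul_cancel₀ _ hpR.ne', Real.exp_log (by linarith)]
      have : T x0 ≤ T x := hx0 ⟨h1, h2⟩
      change _ ≤ T x
      linarith
    · refine @hball (E0 + τ - z) ?_
      rw [Metric.mem_ball, dist_zero_right, Real.norm_eq_abs, abs_of_pos] <;> linarith
    · intro q hq; exact hq.elim
  · simp only; linarith

lemma rate_nonneg (V : ℤ → ℝ) (E : ℝ) (N : ℕ) : 0 ≤ logNormRate V E N := by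
  unfold logNormRate
  rw [opNorm_eq]
  exact mul_nonneg (by positivity) (Real.log_nonneg (one_le_norm (tm_det V E N)))

lemma rate_bdd {V : ℤ → ℝ} {B : ℝ} (hB : ∀ n, |V n| ≤ B) (E : ℝ) :
    ∃ C, ∀ N, logNormRate V E N ≤ C := by
  obtain ⟨C, hC1, hC⟩ := tm_norm_bdd V E B hB
  refine ⟨Real.log C, fun N => ?_⟩
  unfold logNormRate
  rw [opNorm_eq]
  rcases Nat.eq_zero_or_pos N with rfl | hN
  · simpa using Real.log_nonneg hC1
  · have hN' : (0 : ℝ) < N := by exact_mod_cast hN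
    have h1 : Real.log ‖transferMatrix V E N‖ ≤ N * Real.log C := by
      rw [← Real.log_pow]
      exact Real.log_le_log (by linarith [one_le_norm (tm_det V E N)]) (hC N)
    rw [one_div, inv_mul_le_iff₀ hN']
    exact h1

lemma rate_isBdd {V : ℤ → ℝ} {B : ℝ} (hB : ∀ n, |V n| ≤ B) (E : ℝ) :
    IsBoundedUnder (· ≤ ·) atTop (fun N : ℕ => logNormRate V E N) := by
  obtain ⟨C, hC⟩ := rate_bdd hB E
  exact isBoundedUnder_of ⟨C, hC⟩

lemma rate_isBdd' (V : ℤ → ℝ) (E : ℝ) :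
    IsBoundedUnder (· ≥ ·) atTop (fun N : ℕ => logNormRate V E N) :=
  isBoundedUnder_of ⟨0, rate_nonneg V E⟩

lemma lyap_ge {V : ℤ → ℝ} {p : ℕ} (hp : 1 ≤ p) (per : IsPeriodic V p) {E γ : ℝ} (hγ : 0 < γ)
    (h : Real.exp (γ * p) + 1 ≤ (transferMatrix V E p).trace) : γ ≤ lyapExp V E := by
  obtain ⟨B, hB⟩ := periodic_bdd hp per
  have hpR : (0 : ℝ) < p := by exact_mod_cast hp
  refine le_limsup_of_frequently_le ?_ (rate_isBdd hB E)
  rw [frequently_atTop]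
  intro M
  refine ⟨(M + 1) * p, by nlinarith, ?_⟩
  have hexp : 1 < Real.exp (γ * p) := Real.one_lt_exp_iff.2 (mul_pos hγ hpR)
  have ht : 2 < (transferMatrix V E p).trace := by linarith
  have hd := tm_det V E p
  have h1 := lam_ge hd ht
  have h2 := lam_pow_le_norm hd ht (M + 1)
  have h3 : Real.exp (γ * p) ^ (M + 1) ≤ ‖transferMatrix V E p ^ (M + 1)‖ :=
    (pow_le_pow_left₀ (Real.exp_pos _).le (by linarith) _).trans h2
  unfold logNormRate
  rw [opNorm_eq, tm_mul per]
  have hN : (0 : ℝ) < ((M + 1) * p : ℕ) := by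
    have : 0 < (M + 1) * p := by positivity
    exact_mod_cast this
  rw [one_div, le_inv_mul_iff₀ hN]
  have h4 := Real.log_le_log (pow_pos (Real.exp_pos _) _) h3
  rw [Real.log_pow, Real.log_exp] at h4
  refine le_trans (le_of_eq ?_) h4
  push_cast; ring

end Helpers

/-- limit-periodic potentials with a discontinuity of the Lyapunov
exponent are dense in the space of limit-periodic potentials. -/
theorem statement17 (W : ℤ → ℝ) (hW : IsLimitPeriodic W) (ε : ℝ) (hε : 0 < ε) :
    ∃ (V : ℤ → ℝ) (Estar γ : ℝ) (Vk : ℕ → ℤ → ℝ) (p : ℕ → ℕ),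
      IsLimitPeriodic V ∧ (∀ n : ℤ, |V n - W n| ≤ ε) ∧ 0 < γ ∧
      StrictMono p ∧ (∀ k, 1 ≤ p k) ∧ (∀ k, IsPeriodic (Vk k) (p k)) ∧
      (∀ k, ∀ n : ℤ, 0 ≤ n → n ≤ (p k : ℤ) → V n = Vk k n) ∧
      (∀ δ > (0 : ℝ), ∃ K : ℕ, ∀ k ≥ K, ∀ n : ℤ, |V n - Vk k n| ≤ δ) ∧
      (∀ k, γ ≤ lyapExp (Vk k) Estar) ∧
      Filter.liminf
        (fun E : ℝ => Filter.liminf (fun N : ℕ => logNormRate V E N) Filter.atTop)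
        (nhdsWithin Estar {Estar}ᶜ) = 0 := by
  classical
  obtain ⟨Wk, pk, hWk, hWlim⟩ := hW
  obtain ⟨K0, hK0⟩ := hWlim (ε / 2) (by linarith)
  have hW0 := hK0 K0 le_rfl
  obtain ⟨hp0, hper0⟩ := hWk K0
  set η : ℕ → ℝ := fun k => ε / 2 / 2 / 2 ^ k with hη
  have hηpos : ∀ k, 0 < η k := fun k => by simp only [hη]; positivity
  obtain ⟨γ, hγ, S0, hS0, hS0V, hS0len⟩ := base hp0 hper0 (η 0) (hηpos 0)
  choose nxt hnxt1 hnxt2 using fun (k : ℕ) (S : {S : St // SInv γ S}) =>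
    step hγ S.1 S.2 (η (k + 1)) (hηpos (k + 1))
  let S : ℕ → {S : St // SInv γ S} := fun k =>
    Nat.rec ⟨S0, hS0⟩ (fun k s => ⟨nxt k s, hnxt1 k s⟩) k
  have hinv : ∀ k, SInv γ (S k).1 := fun k => (S k).2
  have hrel : ∀ k, SRel (η (k + 1)) (S k).1 (S (k + 1)).1 := fun k => hnxt2 k (S k)
  have hS0' : (S 0).1 = S0 := rfl
  generalize S = S at *
  have hlen : ∀ k, (S k).1.b - (S k).1.z ≤ η k := by
    intro k
    cases k with
    | zero => rw [hS0']; exact hS0len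
    | succ k => exact (hrel k).len
  have hab : ∀ k, (S k).1.a ≤ (S k).1.b := fun k => by
    have h1 := (hinv k).za
    have h2 := (hinv k).ab
    linarith
  have hdiff : ∀ n k, dist ((S k).1.V n) ((S (k + 1)).1.V n) ≤ ε / 2 / 2 / 2 ^ k := by
    intro n k
    rw [dist_comm, Real.dist_eq]
    refine ((hrel k).near n).trans ?_
    have h1 := hlen k
    have h2 := hab k
    change _ ≤ η k
    linarith
  have hcau : ∀ n, ∃ v, Tendsto (fun k => (S k).1.V n) atTop (nhds v) := fun n =>
    cauchySeq_tendsto_of_complete (cauchySeq_of_le_geometric_two (hdiff n))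
  choose V hV using hcau
  have hVd : ∀ k n, |V n - (S k).1.V n| ≤ ε / 2 / 2 ^ k := by
    intro k n
    rw [← Real.dist_eq, dist_comm]
    exact dist_le_of_le_geometric_two_of_tendsto (hdiff n) (hV n) k
  have hpmono : StrictMono (fun k => (S k).1.p) := strictMono_nat_of_lt_succ fun k => (hrel k).pp
  have hVeq : ∀ k, ∀ n : ℤ, 0 ≤ n → n ≤ ((S k).1.p : ℤ) → V n = (S k).1.V n := by
    intro k n hn0 hn1
    have key : ∀ j, k ≤ j → (S j).1.V n = (S k).1.V n := by
      intro j hj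
      induction j, hj using Nat.le_induction with
      | base => rfl
      | succ j hj ih =>
        rw [← ih]
        apply (hrel j).eqV n hn0
        have : (S k).1.p ≤ (S j).1.p := hpmono.monotone hj
        omega
    refine tendsto_nhds_unique (hV n) (tendsto_const_nhds.congr' ?_)
    filter_upwards [eventually_ge_atTop k] with j hj
    exact (key j hj).symm
  have hsmall : ∀ δ > (0 : ℝ), ∃ K : ℕ, ∀ k ≥ K, ε / 2 / 2 ^ k ≤ δ := by
    intro δ hδ
    have hl : Tendsto (fun k : ℕ => ε / 2 / 2 ^ k) atTop (nhds 0) :=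
      tendsto_const_nhds.div_atTop (tendsto_pow_atTop_atTop_of_one_lt (by norm_num))
    exact eventually_atTop.1 (hl.eventually_le_const hδ)
  have hηle : ∀ k, η k ≤ ε / 2 / 2 ^ k := fun k => by
    simp only [hη]
    gcongr
    linarith
  have hVlim : ∀ δ > (0 : ℝ), ∃ K : ℕ, ∀ k ≥ K, ∀ n : ℤ, |V n - (S k).1.V n| ≤ δ := by
    intro δ hδ
    obtain ⟨K, hK⟩ := hsmall δ hδ
    exact ⟨K, fun k hk n => (hVd k n).trans (hK k hk)⟩
  have ham : Monotone (fun k => (S k).1.a) := monotone_nat_of_le_succ fun k => (hrel k).aa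
  have hbm : Antitone (fun k => (S k).1.b) := antitone_nat_of_succ_le fun k => (hrel k).bb
  have hcross : ∀ i k, (S i).1.a ≤ (S k).1.b := by
    intro i k
    rcases le_total i k with h | h
    · exact (ham h).trans (hab k)
    · exact (hab i).trans (hbm h)
  set Es : ℝ := ⨆ k, (S k).1.a with hEs
  have hEa : ∀ k, (S k).1.a ≤ Es := fun k =>
    le_ciSup (f := fun k => (S k).1.a) ⟨(S 0).1.b, by rintro _ ⟨i, rfl⟩; exact hcross i 0⟩ k
  have hEb : ∀ k, Es ≤ (S k).1.b := fun k => ciSup_le fun i => hcross i k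
  obtain ⟨B0, hB0⟩ := periodic_bdd (hinv 0).p1 (hinv 0).per
  have hVB : ∀ n, |V n| ≤ ε / 2 + B0 := by
    intro n
    have h1 := hVd 0 n
    have h2 := abs_add_le (V n - (S 0).1.V n) ((S 0).1.V n)
    rw [sub_add_cancel] at h2
    have h3 := hB0 n
    simp at h1
    linarith
  have hFmem : ∀ k j, k + 1 ≤ j → ((S (k + 1)).1.z, η (k + 1)) ∈ (S j).1.F := by
    intro k j hj
    induction j, hj using Nat.le_induction with
    | base => exact (hrel k).mem
    | succ j hj ih => exact (hrel j).sub ih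
  have hfz : ∀ k, Filter.liminf (fun N : ℕ => logNormRate V (S (k + 1)).1.z N) Filter.atTop
      ≤ η (k + 1) := by
    intro k
    refine liminf_le_of_frequently_le ?_ (rate_isBdd' V _)
    rw [frequently_atTop]
    intro M
    set j := M + k + 1 with hj
    have hid : ∀ i, i ≤ (S i).1.p := fun i => hpmono.le_apply
    refine ⟨(S (j + 1)).1.p, by have := hid (j + 1); omega, ?_⟩
    have hbd := (hrel j).bd _ (hFmem k j (by omega))
    have he : transferMatrix V (S (k + 1)).1.z (S (j + 1)).1.p
        = transferMatrix (S (j + 1)).1.V (S (k + 1)).1.z (S (j + 1)).1.p := by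
      apply tm_congr
      intro n hn
      rw [hVeq (j + 1) n (by omega) (by omega)]
    unfold logNormRate
    rw [opNorm_eq, he]
    have hN : (0 : ℝ) < (S (j + 1)).1.p := by exact_mod_cast (hinv (j + 1)).p1
    rw [one_div, inv_mul_le_iff₀ hN]
    have h4 := Real.log_le_log (by linarith [one_le_norm (tm_det (S (j + 1)).1.V (S (k + 1)).1.z (S (j + 1)).1.p)]) hbd
    rw [Real.log_exp] at h4
    linarith
  have hf0 : ∀ E, 0 ≤ Filter.liminf (fun N : ℕ => logNormRate V E N) Filter.atTop := fun E =>
    le_liminf_of_le (rate_isBdd hVB E).isCoboundedUnder_ge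
      (Eventually.of_forall (rate_nonneg V E))
  have hztend : Tendsto (fun k => (S (k + 1)).1.z) atTop (nhdsWithin Es {Es}ᶜ) := by
    rw [tendsto_nhdsWithin_iff]
    constructor
    · rw [Metric.tendsto_atTop]
      intro δ hδ
      obtain ⟨K, hK⟩ := hsmall (δ / 2) (by linarith)
      refine ⟨K, fun k hk => ?_⟩
      have h1 := hK (k + 1) (by omega)
      have h2 := hηle (k + 1)
      have h3 := hlen (k + 1)
      have h4 := hEa (k + 1)
      have h5 := hEb (k + 1)
      have h6 := (hinv (k + 1)).za
      rw [Real.dist_eq, abs_lt]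
      constructor <;> linarith
    · refine Eventually.of_forall fun k => ?_
      have h4 := hEa (k + 1)
      have h6 := (hinv (k + 1)).za
      simp only [Set.mem_compl_iff, Set.mem_singleton_iff]
      exact (lt_of_lt_of_le h6 h4).ne
  have hfreq : ∀ δ > (0 : ℝ), ∃ᶠ E in nhdsWithin Es {Es}ᶜ,
      Filter.liminf (fun N : ℕ => logNormRate V E N) Filter.atTop ≤ δ := by
    intro δ hδ
    refine hztend.frequently (Eventually.frequently ?_)
    obtain ⟨K, hK⟩ := hsmall δ hδ
    filter_upwards [eventually_ge_atTop K] with k hk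
    exact (hfz k).trans ((hηle (k + 1)).trans (hK (k + 1) (by omega)))
  refine ⟨V, Es, γ, fun k => (S k).1.V, fun k => (S k).1.p, ?_, ?_, hγ, hpmono,
    fun k => (hinv k).p1, fun k => (hinv k).per, hVeq, hVlim, ?_, ?_⟩
  · exact ⟨fun k => (S k).1.V, fun k => (S k).1.p, fun k => ⟨(hinv k).p1, (hinv k).per⟩, hVlim⟩
  · intro n
    have h1 := hVd 0 n
    rw [hS0', hS0V, pow_zero, div_one] at h1
    have h2 := hW0 n
    have h3 := abs_sub_le (V n) (Wk K0 n) (W n)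
    rw [abs_sub_comm (Wk K0 n)] at h3
    linarith
  · intro k
    obtain ⟨γ', hγ', hh⟩ := (hinv k).hyp
    exact hγ'.le.trans (lyap_ge (hinv k).p1 (hinv k).per (hγ.trans hγ') (hh Es (hEa k) (hEb k)))
  · apply le_antisymm
    · refine le_of_forall_pos_le_add fun δ hδ => ?_
      rw [zero_add]
      exact liminf_le_of_frequently_le (hfreq δ hδ) (isBoundedUnder_of ⟨0, hf0⟩)
    · exact le_liminf_of_le (IsCoboundedUnder.of_frequently_le (hfreq 1 one_pos))
        (Eventually.of_forall hf0)
end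

section
/- Let V : ℤ → ℝ be p-periodic (p ≥ 1) with Schrödinger operator H, and let E ∈ ℝ. Then (E : ℂ) ∈ σ(H) if and only if |tr A_p(E,V)| ≤ 2. -/
open Filter Matrix

namespace S19

/-- The Hilbert space. -/
noncomputable abbrev L2 := lp (fun _ : ℤ => ℂ) 2

theorem two_pos' : 0 < (2 : ENNReal).toReal := by norm_num

theorem memShift (k : ℤ) (ψ : L2) : Memℓp (fun n : ℤ => (ψ (n + k) : ℂ)) 2 := by
  have h := (lp.memℓp ψ).summable two_pos'
  apply memℓp_gen
  exact (Equiv.addRight k).summable_iff.mpr h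

/-- Shift by `k`. -/
noncomputable def shift (k : ℤ) : L2 →L[ℂ] L2 :=
  LinearMap.mkContinuous
    { toFun := fun ψ => ⟨fun n => ψ (n + k), memShift k ψ⟩
      map_add' := fun a b => rfl
      map_smul' := fun c a => rfl } 1 (by
    intro ψ
    rw [one_mul]
    apply lp.norm_le_of_tsum_le two_pos' (norm_nonneg _)
    rw [lp.norm_rpow_eq_tsum two_pos']
    exact le_of_eq ((Equiv.addRight k).tsum_eq (fun n : ℤ => ‖ψ n‖ ^ (2 : ENNReal).toReal)))

@[simp] theorem shift_apply (k : ℤ) (ψ : L2) (n : ℤ) : shift k ψ n = ψ (n + k) := rfl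

theorem shift_norm (k : ℤ) : ‖shift k‖ ≤ 1 := LinearMap.mkContinuous_norm_le _ zero_le_one _

/-- Multiplication by `f` is bounded. -/
def MulOp (f : ℤ → ℂ) : Prop := ∃ D : L2 →L[ℂ] L2, ∀ ψ n, D ψ n = f n * ψ n

theorem MulOp.const (c : ℂ) : MulOp (fun _ => c) := ⟨c • 1, fun ψ n => by simp⟩

theorem MulOp.sub {f g : ℤ → ℂ} (hf : MulOp f) (hg : MulOp g) : MulOp (fun n => f n - g n) := by
  obtain ⟨D, hD⟩ := hf
  obtain ⟨D', hD'⟩ := hg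
  exact ⟨D - D', fun ψ n => by simp [hD, hD', sub_mul]⟩

theorem MulOp.mul {f g : ℤ → ℂ} (hf : MulOp f) (hg : MulOp g) : MulOp (fun n => f n * g n) := by
  obtain ⟨D, hD⟩ := hf
  obtain ⟨D', hD'⟩ := hg
  exact ⟨D * D', fun ψ n => by simp [hD, hD', mul_assoc]⟩

theorem MulOp.shift {f : ℤ → ℂ} (hf : MulOp f) (k : ℤ) : MulOp (fun n => f (n + k)) := by
  obtain ⟨D, hD⟩ := hf
  exact ⟨S19.shift k * D * S19.shift (-k), fun ψ n => by simp [hD]⟩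

/-- `F` factors through `K`. -/
def Rep (K : L2 →L[ℂ] L2) (F : L2 → ℤ → ℂ) : Prop := ∃ Q : L2 →L[ℂ] L2, ∀ ψ n, F ψ n = Q (K ψ) n

theorem Rep.sub {K : L2 →L[ℂ] L2} {F G : L2 → ℤ → ℂ} (hf : Rep K F) (hg : Rep K G) :
    Rep K (fun ψ n => F ψ n - G ψ n) := by
  obtain ⟨D, hD⟩ := hf
  obtain ⟨D', hD'⟩ := hg
  exact ⟨D - D', fun ψ n => by simp [hD, hD']⟩

theorem Rep.mul {K : L2 →L[ℂ] L2} {F : L2 → ℤ → ℂ} {f : ℤ → ℂ} (hf : MulOp f) (hg : Rep K F) :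
    Rep K (fun ψ n => f n * F ψ n) := by
  obtain ⟨D, hD⟩ := hf
  obtain ⟨D', hD'⟩ := hg
  exact ⟨D * D', fun ψ n => by simp [hD, hD']⟩

theorem Rep.shift {K : L2 →L[ℂ] L2} {F : L2 → ℤ → ℂ} (hg : Rep K F) (k : ℤ) :
    Rep K (fun ψ n => F ψ (n + k)) := by
  obtain ⟨D', hD'⟩ := hg
  exact ⟨S19.shift k * D', fun ψ n => by simp [hD']⟩

/-- Monodromy based at `n`. -/
noncomputable def P (V : ℤ → ℝ) (E : ℝ) (n : ℤ) (k : ℕ) : Matrix (Fin 2) (Fin 2) ℝ :=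
  transferMatrix (fun j => V (n + j)) E k

/-- One step. -/
def T (V : ℤ → ℝ) (E : ℝ) (n : ℤ) : Matrix (Fin 2) (Fin 2) ℝ := !![E - V n, -1; 1, 0]

theorem P_zero (V : ℤ → ℝ) (E : ℝ) (n : ℤ) : P V E n 0 = 1 := by simp [P, transferMatrix]

theorem tm_eq (V : ℤ → ℝ) (E : ℝ) (N : ℕ) : transferMatrix V E N =
    ((List.range N).map
      (fun n : ℕ => !![E - V ((N : ℤ) - ((n : ℤ) + 1)), -1; (1 : ℝ), 0])).prod := by
  unfold transferMatrix
  congr 1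
  have : ∀ (l : List ℕ) (f : ℤ → Matrix (Fin 2) (Fin 2) ℝ),
      List.map f (do let a ← l; pure (a : ℤ)) = List.map (fun n : ℕ => f n) l := by
    intro l f
    induction l with
    | nil => rfl
    | cons a l ih => simpa using ih
  exact this _ _

theorem P_succ (V : ℤ → ℝ) (E : ℝ) (n : ℤ) (k : ℕ) :
    P V E n (k + 1) = T V E (n + k) * P V E n k := by
  simp only [P, tm_eq, List.range_succ_eq_map, List.map_cons, List.prod_cons, List.map_map,
    T]
  congr 2
  · simp
  · congr 1
    funext j
    simp

theorem P_succ' (V : ℤ → ℝ) (E : ℝ) (n : ℤ) (k : ℕ) :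
    P V E n (k + 1) = P V E (n + 1) k * T V E n := by
  induction k with
  | zero => simp [P_succ, P_zero]
  | succ k ih =>
    rw [P_succ, ih, P_succ V E (n + 1) k, mul_assoc]
    congr 2
    push_cast
    ring

theorem T_det (V : ℤ → ℝ) (E : ℝ) (n : ℤ) : (T V E n).det = 1 := by simp [T]

theorem P_det (V : ℤ → ℝ) (E : ℝ) (n : ℤ) (k : ℕ) : (P V E n k).det = 1 := by
  induction k with
  | zero => simp [P_zero]
  | succ k ih => rw [P_succ, det_mul, ih, T_det, one_mul]

theorem trace_step (V : ℤ → ℝ) (E : ℝ) (p : ℕ) (hper : IsPeriodic V p) (n : ℤ) :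
    (P V E (n + 1) p).trace = (P V E n p).trace := by
  have h : P V E (n + 1) p * T V E n = T V E n * P V E n p := by
    rw [← P_succ', P_succ]
    simp [T, hper n]
  have hu : IsUnit (T V E n).det := by simp [T_det]
  calc (P V E (n + 1) p).trace = (P V E (n + 1) p * T V E n * (T V E n)⁻¹).trace := by
        rw [Matrix.mul_assoc, Matrix.mul_nonsing_inv _ hu, Matrix.mul_one]
    _ = _ := by
        rw [h, Matrix.trace_mul_comm, ← Matrix.mul_assoc, Matrix.nonsing_inv_mul _ hu,
          Matrix.one_mul]

theorem trace_eq (V : ℤ → ℝ) (E : ℝ) (p : ℕ) (hper : IsPeriodic V p) (n : ℤ) :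
    (P V E n p).trace = (transferMatrix V E p).trace := by
  have h0 : (P V E 0 p).trace = (transferMatrix V E p).trace := by simp [P]
  rw [← h0]
  induction n with
  | zero => rfl
  | succ i ih => rw [trace_step V E p hper, ih]
  | pred i ih => rw [← ih, ← trace_step V E p hper]; simp

theorem P_per (V : ℤ → ℝ) (E : ℝ) (p : ℕ) (hper : IsPeriodic V p) (n : ℤ) (k : ℕ) :
    P V E (n + p) k = P V E n k := by
  unfold P
  congr 1
  funext j
  rw [← hper (n + j)]
  congr 1
  ring

theorem P_rec0 (V : ℤ → ℝ) (E : ℝ) (n : ℤ) (k : ℕ) (j : Fin 2) :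
    P V E n (k + 1) 0 j = (E - V (n + k)) * P V E n k 0 j - P V E n k 1 j := by
  rw [P_succ]; simp [T, Matrix.mul_apply, Fin.sum_univ_two]; ring

theorem P_rec1 (V : ℤ → ℝ) (E : ℝ) (n : ℤ) (k : ℕ) (j : Fin 2) :
    P V E n (k + 1) 1 j = P V E n k 0 j := by
  rw [P_succ]; simp [T, Matrix.mul_apply, Fin.sum_univ_two]

section op
variable {V : ℤ → ℝ} {H : L2 →L[ℂ] L2}

theorem mulV (hH : IsSchrodingerOp V H) : MulOp (fun n => (V n : ℂ)) :=
  ⟨H - shift 1 - shift (-1), fun ψ n => by simp [hH ψ n, ← sub_eq_add_neg]; ring⟩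

theorem mulEV (hH : IsSchrodingerOp V H) (E : ℝ) (k : ℕ) :
    MulOp (fun n => (E : ℂ) - V (n + k)) :=
  (MulOp.const _).sub ((mulV hH).shift k)

theorem mulP (hH : IsSchrodingerOp V H) (E : ℝ) (k : ℕ) :
    ∀ i j : Fin 2, MulOp (fun n => (P V E n k i j : ℂ)) := by
  induction k with
  | zero => intro i j; simp only [P_zero]; exact MulOp.const _
  | succ k ih =>
    intro i j
    fin_cases i
    · simp only [Fin.zero_eta, P_rec0]
      push_cast
      exact ((mulEV hH E k).mul (ih 0 j)).sub (ih 1 j)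
    · simp only [Fin.mk_one, P_rec1]
      exact ih 0 j

theorem K_apply (hH : IsSchrodingerOp V H) (E : ℝ) (ψ : L2) (n : ℤ) :
    (algebraMap ℂ (L2 →L[ℂ] L2) (E : ℂ) - H) ψ n
      = E * ψ n - (ψ (n + 1) + ψ (n - 1) + V n * ψ n) := by
  rw [← hH ψ n, Algebra.algebraMap_eq_smul_one]
  rfl

theorem repStep (hH : IsSchrodingerOp V H) (E : ℝ) (k : ℕ) :
    Rep (algebraMap ℂ (L2 →L[ℂ] L2) (E : ℂ) - H) (fun ψ n =>
      ψ (n + k) - (P V E n k 0 0 * ψ n + P V E n k 0 1 * ψ (n - 1))) ∧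
    Rep (algebraMap ℂ (L2 →L[ℂ] L2) (E : ℂ) - H) (fun ψ n =>
      ψ (n + k - 1) - (P V E n k 1 0 * ψ n + P V E n k 1 1 * ψ (n - 1))) := by
  induction k with
  | zero =>
    constructor <;> exact ⟨0, fun ψ n => by simp [P_zero]⟩
  | succ k ih =>
    constructor
    · have hK : Rep (algebraMap ℂ (L2 →L[ℂ] L2) (E : ℂ) - H)
        (fun ψ n => (algebraMap ℂ (L2 →L[ℂ] L2) (E : ℂ) - H) ψ n) := ⟨1, fun ψ n => by simp⟩
      have h := ((ih.1.mul (mulEV hH E k)).sub ih.2).sub (hK.shift k)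
      convert h using 3 with ψ n
      rw [K_apply hH]
      simp only [P_rec0]
      push_cast
      rw [← add_assoc]
      ring
    · convert ih.1 using 3 with ψ n
      simp only [P_rec1]
      push_cast
      rw [← add_assoc, add_sub_cancel_right]

theorem repB (hH : IsSchrodingerOp V H) (E : ℝ) (p : ℕ) (hper : IsPeriodic V p) :
    Rep (algebraMap ℂ (L2 →L[ℂ] L2) (E : ℂ) - H) (fun ψ n =>
      ψ (n + p) + ψ (n - p) - ((transferMatrix V E p).trace : ℂ) * ψ n) := by
  obtain ⟨h0, h1⟩ := repStep hH E p
  have h0' := (h0.shift (-p)).mul (mulP hH E p 1 1)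
  have h1' := (h1.shift (-p)).mul (mulP hH E p 0 1)
  have h := (h0.sub (h0'.sub h1'))
  convert h using 3 with ψ n
  have hP : P V E (n + -p) p = P V E n p := by
    rw [← P_per V E p hper]; simp
  have hd : ((P V E n p).det : ℂ) = 1 := by rw [P_det]; simp
  rw [← trace_eq V E p hper n, hP, Matrix.trace_fin_two]
  rw [Matrix.det_fin_two] at hd
  push_cast at hd ⊢
  rw [neg_add_cancel_right, ← sub_eq_add_neg]
  linear_combination -(ψ (n - p) : ℂ) * hd

theorem selfAdj (hH : IsSchrodingerOp V H) : IsSelfAdjoint H := by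
  rw [ContinuousLinearMap.isSelfAdjoint_iff_isSymmetric]
  intro f g
  have e1 := (lp.hasSum_inner (𝕜 := ℂ) (shift 1 f) g)
  have e2 := (lp.hasSum_inner (𝕜 := ℂ) (shift (-1) f) g)
  have key : ∀ (k : ℤ) (f g : L2), inner ℂ (shift k f) g = inner ℂ f (shift (-k) g) := by
    intro k f g
    rw [lp.inner_eq_tsum, lp.inner_eq_tsum]
    rw [← (Equiv.addRight k).tsum_eq (fun n : ℤ => inner ℂ (f n) (shift (-k) g n))]
    simp
  have hM : inner ℂ ((H - shift 1 - shift (-1)) f) g = inner ℂ f ((H - shift 1 - shift (-1)) g) := by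
    rw [lp.inner_eq_tsum, lp.inner_eq_tsum]
    congr 1
    funext n
    simp [hH f n, hH g n, ← sub_eq_add_neg]
    ring
  have a := key 1 f g
  have b := key (-1) f g
  simp only [neg_neg] at b
  simp only [_root_.sub_apply, inner_sub_left, inner_sub_right] at hM
  change inner ℂ (H f) g = inner ℂ f (H g)
  linear_combination hM + a + b

theorem dir1 (hH : IsSchrodingerOp V H) (E : ℝ) (p : ℕ) (hper : IsPeriodic V p)
    (h : 2 < |(transferMatrix V E p).trace|) : (E : ℂ) ∉ spectrum ℂ H := by
  obtain ⟨Q, hQ⟩ := repB hH E p hper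
  set K := algebraMap ℂ (L2 →L[ℂ] L2) (E : ℂ) - H with hK
  set D := (transferMatrix V E p).trace
  have hB : algebraMap ℂ (L2 →L[ℂ] L2) (D : ℂ) - (shift p + shift (-p)) = (-Q) * K := by
    ext ψ n
    have := hQ ψ n
    rw [Algebra.algebraMap_eq_smul_one]
    change (D : ℂ) * ψ n - (ψ (n + p) + ψ (n + -p)) = -(Q (K ψ) n)
    rw [← this, ← sub_eq_add_neg]
    ring
  have hu : (D : ℂ) ∈ resolventSet ℂ (shift p + shift (-p)) := by
    have : Nontrivial L2 := ⟨lp.single 2 (0 : ℤ) (1 : ℂ), 0, fun h => by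
      have := congrArg (fun f : L2 => f 0) h
      simp at this⟩
    apply spectrum.mem_resolventSet_of_norm_lt
    calc _ ≤ ‖shift p‖ + ‖shift (-p)‖ := norm_add_le _ _
      _ ≤ 1 + 1 := add_le_add (shift_norm _) (shift_norm _)
      _ < _ := by rw [Complex.norm_real, Real.norm_eq_abs]; linarith
  rw [spectrum.mem_resolventSet_iff, hB] at hu
  obtain ⟨u, hu⟩ := hu
  have hL : (↑u⁻¹ * -Q) * K = 1 := by rw [mul_assoc, ← hu, Units.inv_mul]
  have hs : star K = K := by
    rw [hK, star_sub, (selfAdj hH).star_eq]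
    simp [Algebra.algebraMap_eq_smul_one]
  have hR : K * star (↑u⁻¹ * -Q) = 1 := by
    have := congrArg star hL
    rwa [star_mul, hs, star_one] at this
  rw [spectrum.notMem_iff]
  exact ⟨⟨K, _, hR, by rw [← left_inv_eq_right_inv hL hR]; exact hL⟩, rfl⟩
end op

theorem ext_sol (V : ℤ → ℝ) (E : ℝ) (p : ℕ) (hp : 1 ≤ p) (hper : IsPeriodic V p)
    (a : ℕ → ℂ) (l : ℂ) (hl : ‖l‖ = 1) (ha : ∀ k, a (k + p) = l * a k)
    (hr : ∀ k : ℕ, a (k + 2) = (E - V (k + 1)) * a (k + 1) - a k) :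
    ∃ u : ℤ → ℂ, (∀ n, u (n + 1) = (E - V n) * u n - u (n - 1)) ∧ (∃ C, ∀ n, ‖u n‖ ≤ C) ∧
      ∀ k : ℕ, u k = a k := by
  have hl0 : l ≠ 0 := by rintro rfl; simp at hl
  have ham : ∀ m k : ℕ, a (k + m * p) = l ^ m * a k := by
    intro m k
    induction m with
    | zero => simp
    | succ m ih => rw [add_mul, one_mul, ← add_assoc, ha, ih]; ring
  have hVm : ∀ (m : ℕ) (n : ℤ), V (n + m * p) = V n := by
    intro m n
    induction m with
    | zero => simp
    | succ m ih =>
      push_cast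
      rw [add_mul, one_mul, ← add_assoc, hper, ih]
  have hbd : ∀ k, ‖a k‖ ≤ ∑ j ∈ Finset.range p, ‖a j‖ := by
    intro k
    have h1 := ham (k / p) (k % p)
    rw [Nat.mod_add_div'] at h1
    rw [h1, norm_mul, norm_pow, hl, one_pow, one_mul]
    exact Finset.single_le_sum (f := fun j => ‖a j‖) (fun j _ => norm_nonneg _)
      (Finset.mem_range.mpr (Nat.mod_lt _ hp))
  have hnn : ∀ n : ℤ, 0 ≤ n + n.natAbs * p := by
    intro n
    have : (n.natAbs : ℤ) * 1 ≤ n.natAbs * p := by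
      apply mul_le_mul_of_nonneg_left <;> omega
    omega
  have spec : ∀ (n : ℤ) (m k : ℕ), n + m * p = k →
      (l ^ n.natAbs)⁻¹ * a (n + n.natAbs * p).toNat * l ^ m = a k := by
    intro n m k h
    have h' : (n + n.natAbs * p).toNat + m * p = k + n.natAbs * p := by
      have hc := Int.toNat_of_nonneg (hnn n)
      have : ((n + n.natAbs * p).toNat : ℤ) + m * p = k + n.natAbs * p := by
        rw [hc]; linarith
      exact_mod_cast this
    have h2 := ham m (n + n.natAbs * p).toNat
    rw [h', ham] at h2
    field_simp
    rw [h2]; ring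
  refine ⟨fun n => (l ^ n.natAbs)⁻¹ * a (n + n.natAbs * p).toNat, ?_, ⟨∑ j ∈ Finset.range p, ‖a j‖, ?_⟩, ?_⟩
  · intro n
    have hk : ∃ k : ℕ, n - 1 + ((n.natAbs + 1 : ℕ) : ℤ) * p = k := by
      refine ⟨(n - 1 + ((n.natAbs + 1 : ℕ) : ℤ) * p).toNat, ?_⟩
      rw [Int.toNat_of_nonneg]
      have := hnn n
      push_cast at this ⊢
      linarith [(by exact_mod_cast hp : (1 : ℤ) ≤ p)]
    obtain ⟨k, hk⟩ := hk
    have e0 := spec (n - 1) _ k hk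
    have e1 := spec n (n.natAbs + 1) (k + 1) (by push_cast at hk ⊢; linarith)
    have e2 := spec (n + 1) (n.natAbs + 1) (k + 2) (by push_cast at hk ⊢; linarith)
    have hV : V ((k : ℤ) + 1) = V n := by
      rw [← hVm (n.natAbs + 1) n]
      congr 1
      linarith
    have h := hr k
    rw [hV, ← e0, ← e1, ← e2] at h
    have hne : l ^ (n.natAbs + 1) ≠ 0 := pow_ne_zero _ hl0
    apply mul_right_cancel₀ hne
    rw [h]
    ring
  · intro n
    rw [norm_mul, norm_inv, norm_pow, hl, one_pow, inv_one, one_mul]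
    exact hbd _
  · intro k
    have := spec k 0 k (by simp)
    simpa using this

theorem exists_bloch (V : ℤ → ℝ) (E : ℝ) (p : ℕ) (hp : 1 ≤ p) (hper : IsPeriodic V p)
    (h : |(transferMatrix V E p).trace| ≤ 2) :
    ∃ u : ℤ → ℂ, (∀ n, u (n + 1) = (E - V n) * u n - u (n - 1)) ∧ (∃ C, ∀ n, ‖u n‖ ≤ C) ∧
      ∃ m, u m ≠ 0 := by
  rw [← trace_eq V E p hper 0] at h
  set M := P V E 0 p with hM
  set D := M.trace with hD
  have hD2 : D ^ 2 ≤ 4 := by nlinarith [abs_le.mp h]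
  set s := Real.sqrt (1 - D ^ 2 / 4) with hs
  have hs2 : s ^ 2 = 1 - D ^ 2 / 4 := Real.sq_sqrt (by linarith)
  set l : ℂ := ⟨D / 2, s⟩ with hl
  have hl1 : ‖l‖ = 1 := by
    have : ‖l‖ ^ 2 = 1 := by
      rw [← Complex.normSq_eq_norm_sq, Complex.normSq_apply]
      simp only [hl]
      nlinarith
    nlinarith [norm_nonneg l]
  have hl0 : l ≠ 0 := by intro h0; rw [h0] at hl1; simp at hl1
  have hq : l ^ 2 - D * l + 1 = 0 := by
    apply Complex.ext
    · simp [hl, pow_two]; nlinarith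
    · simp [hl, pow_two]; ring
  have hdet : ((M 0 0 : ℂ) * M 1 1 - M 0 1 * M 1 0) = 1 := by
    have := P_det V E 0 p
    rw [← hM, Matrix.det_fin_two] at this
    exact_mod_cast this
  have hDt : (D : ℂ) = M 0 0 + M 1 1 := by
    rw [hD, Matrix.trace_fin_two]; push_cast; rfl
  have hz : (!![(M 0 0 : ℂ) - l, M 0 1; M 1 0, M 1 1 - l]).det = 0 := by
    rw [Matrix.det_fin_two_of]
    rw [hDt] at hq
    linear_combination hq + hdet
  obtain ⟨w, hw0, hw⟩ := Matrix.exists_mulVec_eq_zero_iff.mpr hz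
  have hwa : (M 0 0 : ℂ) * w 0 + M 0 1 * w 1 = l * w 0 := by
    have := congrFun hw 0
    simp [Matrix.mulVec, dotProduct, Fin.sum_univ_two] at this
    linear_combination this
  have hwb : (M 1 0 : ℂ) * w 0 + M 1 1 * w 1 = l * w 1 := by
    have := congrFun hw 1
    simp [Matrix.mulVec, dotProduct, Fin.sum_univ_two] at this
    linear_combination this
  let a : ℕ → ℂ := fun k => P V E 0 k 0 0 * w 0 + P V E 0 k 0 1 * w 1
  let b : ℕ → ℂ := fun k => P V E 0 k 1 0 * w 0 + P V E 0 k 1 1 * w 1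
  have ra : ∀ k : ℕ, a (k + 1) = (E - V k) * a k - b k := by
    intro k
    simp only [a, b, P_rec0, zero_add]
    push_cast
    ring
  have rb : ∀ k : ℕ, b (k + 1) = a k := by
    intro k
    simp only [a, b, P_rec1]
  have hab : ∀ k, a (k + p) = l * a k ∧ b (k + p) = l * b k := by
    intro k
    induction k with
    | zero => simp only [a, b, zero_add, ← hM, hwa, hwb, P_zero]; simp
    | succ k ih =>
      have hV : V ((k + p : ℕ) : ℤ) = V k := by
        push_cast; exact hper k
      constructor
      · rw [add_right_comm, ra, ra, ih.1, ih.2, hV]; ring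
      · rw [add_right_comm, rb, rb, ih.1]
  obtain ⟨u, hu, hb, hua⟩ := ext_sol V E p hp hper a l hl1 (fun k => (hab k).1) (fun k => by
    rw [ra, rb]; push_cast; rfl)
  refine ⟨u, hu, hb, ?_⟩
  by_contra! hall
  have a0 : ∀ k, a k = 0 := fun k => by rw [← hua, hall]
  apply hw0
  have h0 : w 0 = 0 := by
    have := a0 0
    simpa [a, P_zero] using this
  have h1 : w 1 = 0 := by
    have hbp : b p = 0 := by
      obtain ⟨q, rfl⟩ : ∃ q, p = q + 1 := ⟨p - 1, by omega⟩
      rw [rb, a0]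
    have := (hab 0).2
    rw [zero_add, hbp] at this
    have hb0 : b 0 = w 1 := by simp [b, P_zero]
    rw [hb0] at this
    rcases mul_eq_zero.mp this.symm with h | h
    · exact absurd h hl0
    · exact h
  funext i
  fin_cases i
  · exact h0
  · exact h1

theorem l2_tendsto (G : L2) : Tendsto (fun n : ℤ => (G n : ℂ)) cofinite (nhds 0) := by
  have h := ((lp.memℓp G).summable two_pos').tendsto_cofinite_zero
  rw [tendsto_zero_iff_norm_tendsto_zero]
  have h2 := h.sqrt
  simp only [Real.sqrt_zero] at h2
  refine h2.congr fun n => ?_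
  simp

theorem dir2 {V : ℤ → ℝ} {H : L2 →L[ℂ] L2} (hH : IsSchrodingerOp V H) (E : ℝ) (p : ℕ) (hp : 1 ≤ p)
    (hper : IsPeriodic V p)
    (h : |(transferMatrix V E p).trace| ≤ 2) : (E : ℂ) ∈ spectrum ℂ H := by
  obtain ⟨u, hu, ⟨C, hC⟩, m, hm⟩ := exists_bloch V E p hp hper h
  intro hres
  rw [spectrum.mem_resolventSet_iff] at hres
  obtain ⟨K, hK⟩ := hres
  set G : L2 := (↑K⁻¹ : L2 →L[ℂ] L2) (lp.single 2 m (1 : ℂ)) with hG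
  have hKG : (algebraMap ℂ (L2 →L[ℂ] L2) (E : ℂ) - H) G = lp.single 2 m (1 : ℂ) := by
    rw [← hK, hG, ← mul_apply_eq_comp, Units.mul_inv]; rfl
  have hGe : ∀ n, E * G n - (G (n + 1) + G (n - 1) + V n * G n)
      = (lp.single 2 m (1 : ℂ) : L2) n := by
    intro n; rw [← K_apply hH, hKG]
  let W : ℤ → ℂ := fun n => u (n + 1) * G n - u n * G (n + 1)
  have hW : ∀ n, W n - W (n - 1) = u n * (lp.single 2 m (1 : ℂ) : L2) n := by
    intro n
    rw [← hGe n]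
    simp only [W, sub_add_cancel]
    rw [hu n]
    ring
  have hWt : Tendsto W cofinite (nhds 0) := by
    have bdd : ∀ v : ℤ → ℂ, (∀ n, ‖v n‖ ≤ C) → ∀ g : ℤ → ℂ, Tendsto g cofinite (nhds 0) →
        Tendsto (fun n => v n * g n) cofinite (nhds 0) := by
      intro v hv g hg
      apply squeeze_zero_norm (a := fun n => C * ‖g n‖)
      · intro n; rw [norm_mul]; exact mul_le_mul_of_nonneg_right (hv n) (norm_nonneg _)
      · simpa using (hg.norm.const_mul C)
    have t1 := bdd (fun n => u (n + 1)) (fun n => hC _) _ (l2_tendsto G)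
    have t2 := bdd u hC _ (l2_tendsto (shift 1 G))
    simpa using t1.sub t2
  have hne : ∀ n, n ≠ m → W n = W (n - 1) := by
    intro n hn
    have := hW n
    rw [lp.single_apply_ne _ _ _ hn, mul_zero] at this
    exact sub_eq_zero.mp this
  have up : ∀ k : ℕ, W (m + k) = W m := by
    intro k
    induction k with
    | zero => simp
    | succ k ih => rw [hne _ (by push_cast; omega), ← ih]; congr 1; push_cast; ring
  have dn : ∀ k : ℕ, W (m - 1 - k) = W (m - 1) := by
    intro k
    induction k with
    | zero => simp
    | succ k ih => rw [← ih, hne (m - 1 - k) (by omega)]; congr 1; push_cast; ring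
  have i1 : Function.Injective (fun k : ℕ => m + (k : ℤ)) := by intro x y h; simpa using h
  have i2 : Function.Injective (fun k : ℕ => m - 1 - (k : ℤ)) := by intro x y h; simpa using h
  have z1 : W m = 0 := by
    have t := hWt.comp i1.tendsto_cofinite
    exact tendsto_nhds_unique (tendsto_const_nhds.congr fun k => (up k).symm) t
  have z2 : W (m - 1) = 0 := by
    have t := hWt.comp i2.tendsto_cofinite
    exact tendsto_nhds_unique (tendsto_const_nhds.congr fun k => (dn k).symm) t
  have := hW m
  rw [z1, z2, lp.single_apply_self] at this
  apply hm
  simpa using this.symm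

end S19

/-- for a `p`-periodic potential, `E` lies in the spectrum iff the
trace of the monodromy matrix `A_p(E,V)` has absolute value at most `2`. -/
theorem statement19 (V : ℤ → ℝ) (p : ℕ) (hp : 1 ≤ p) (hper : IsPeriodic V p)
    (H : lp (fun _ : ℤ => ℂ) 2 →L[ℂ] lp (fun _ : ℤ => ℂ) 2)
    (hH : IsSchrodingerOp V H) (E : ℝ) :
    (E : ℂ) ∈ spectrum ℂ H ↔ |(transferMatrix V E p).trace| ≤ 2 := by
  constructor
  · intro h
    by_contra hc
    exact S19.dir1 hH E p hper (not_le.mp hc) h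
  · exact S19.dir2 hH E p hp hper
end
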